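/- Let ψ be a Ma-Minda function such that ψ(𝔻) is a convex set. Let F(z) = z(1+z)/(1−z)³ = z + Σ_{n≥2} n² zⁿ, and suppose r ∈ (0, 1] is such that the function z ↦ F(rz)/r belongs to S*(ψ). If f, g ∈ S*(ψ), then the function z ↦ (f*g)(rz)/r belongs to S*(ψ); that is, the Hadamard product f*g belongs to S*(ψ) on |z| < r. -/

import Mathlib

open Complex Metric Set

noncomputable section

/-- The open unit disk in `ℂ`. -/
def 𝔻 : Set ℂ := Metric.ball 0 1

/-- The class `𝒜` of analytic functions on `𝔻` normalized by `f 0 = 0`, `f' 0 = 1`. -/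
def IsClassA (f : ℂ → ℂ) : Prop :=
  DifferentiableOn ℂ f 𝔻 ∧ f 0 = 0 ∧ deriv f 0 = 1

/-- `g` is subordinate to `F` on the unit disk. -/
def Subordinate (g F : ℂ → ℂ) : Prop :=
  ∃ ω : ℂ → ℂ, DifferentiableOn ℂ ω 𝔻 ∧ ω 0 = 0 ∧ (∀ z ∈ 𝔻, ω z ∈ 𝔻) ∧
    ∀ z ∈ 𝔻, g z = F (ω z)

/-- `ψ` is a Ma-Minda function: analytic and univalent on `𝔻`, `Re ψ > 0`, `ψ 0 = 1`,
`ψ' 0 > 0`, with real Taylor coefficients (expressed via `ψ (conj z) = conj (ψ z)`). -/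
def MaMinda (ψ : ℂ → ℂ) : Prop :=
  DifferentiableOn ℂ ψ 𝔻 ∧ Set.InjOn ψ 𝔻 ∧ (∀ z ∈ 𝔻, 0 < (ψ z).re) ∧
    ψ 0 = 1 ∧ 0 < (deriv ψ 0).re ∧ (deriv ψ 0).im = 0 ∧
    (∀ z ∈ 𝔻, ψ (starRingEnd ℂ z) = starRingEnd ℂ (ψ z))

/-- The Ma-Minda starlike class `S*(ψ)`. -/
def StarlikeMM (ψ f : ℂ → ℂ) : Prop :=
  IsClassA f ∧ (∀ z ∈ 𝔻, z ≠ 0 → f z ≠ 0) ∧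
    Subordinate (fun z => if z = 0 then 1 else z * deriv f z / f z) ψ

/-- The Ma-Minda convex class `C(ψ)`. -/
def ConvexMM (ψ f : ℂ → ℂ) : Prop :=
  IsClassA f ∧ (∀ z ∈ 𝔻, deriv f z ≠ 0) ∧
    Subordinate (fun z => 1 + z * deriv (deriv f) z / deriv f z) ψ

/-- `f` is starlike of order `α`. -/
def StarlikeOrder (α : ℝ) (f : ℂ → ℂ) : Prop :=
  IsClassA f ∧ (∀ z ∈ 𝔻, z ≠ 0 → f z ≠ 0) ∧
    ∀ z ∈ 𝔻, z ≠ 0 → α < (z * deriv f z / f z).re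

/-- `f` is a (normalized) convex function on `𝔻`. -/
def IsConvexFn (f : ℂ → ℂ) : Prop :=
  IsClassA f ∧ (∀ z ∈ 𝔻, deriv f z ≠ 0) ∧
    ∀ z ∈ 𝔻, 0 < (1 + z * deriv (deriv f) z / deriv f z).re

/-!
For `F ∈ S*(ψ)` with coefficients `c n` put `G ζ = F ζ / ζ` and `P ζ = ζ F' ζ / F ζ`, and for a
starlike `f` with coefficients `a n` put `H ζ = f ζ / ζ`. Fix `z` in the unit disk. The rule
`ζ ^ n ↦ a (n + 1) / (n + 1) * z ^ n` extends to a continuous functional `μ` on `C(K, ℂ)`, `K` a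
closed disk about `0`, and `k = ∑ a n * c n / n * z ^ n` satisfies `z k' z / k z = μ (G P) / μ G`.
As `1 / (1 - y ζ) ^ 2` has the coefficients `(n + 1) * y ^ n`, the functional `μ` sends it to
`H (z y)`.

A theorem of Ruscheweyh and Sheil-Small says that starlikeness of `H` and `G` makes `u ↦ μ (G u)` a
Herglotz functional: on holomorphic `u`, and divided by `μ G`, it is an average of the values of `u`
against a nonnegative density. Hence `z k' z / k z` is an average of values of `P` and lies in the
convex open set `ψ(𝔻)`, so `k ∈ S*(ψ)`. For the proof of that theorem write `G = V ^ 2` and exchange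
the two factors `1 / (1 - y ζ)` for `V` one at a time. The Herglotz inequality for a kernel in two
variables need only be checked at points of equal modulus, by the maximum principle, and there it
follows from the monotonicity of the argument along circles that starlikeness provides.

Applied to `g` and `F(r z) / r`, and then to `f` and the outcome, this divides the coefficients by
`n ^ 2` in total, which cancels the coefficients of `z (1 + z) / (1 - z) ^ 3`.
-/

open Real (circleAverage circleAverage_congr_sphere circleAverage_fun_sub circleAverage_fun_add
  circleAverage_nonneg_of_nonneg)
open scoped ComplexConjugate

/-! ### Minimum principles for the real part -/

section MinimumPrinciple

variable {U V : Set ℂ} {g : ℂ → ℂ} {K : ℂ → ℂ → ℂ} {c R : ℝ}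

theorem le_re_of_forall_mem_frontier (hU : Bornology.IsBounded U) (hg : DiffContOnCl ℂ g U)
    (h : ∀ z ∈ frontier U, c ≤ (g z).re) {z : ℂ} (hz : z ∈ closure U) : c ≤ (g z).re := by
  have hexp : DiffContOnCl ℂ (fun z => exp (-g z)) U :=
    (differentiable_exp.diffContOnCl (s := univ)).comp hg.neg (mapsTo_univ _ _)
  have hle : ‖exp (-g z)‖ ≤ Real.exp (-c) :=
    norm_le_of_forall_mem_frontier_norm_le hU hexp
      (fun w hw => by simpa [norm_exp] using h w hw) hz
  simpa [norm_exp] using hle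

theorem re_pos_of_re_nonneg (hU : IsOpen U) (hUc : IsPreconnected U) (hg : DifferentiableOn ℂ g U)
    (h : ∀ z ∈ U, 0 ≤ (g z).re) {a z : ℂ} (ha : a ∈ U) (hpos : 0 < (g a).re) (hz : z ∈ U) :
    0 < (g z).re := by
  by_contra hcon
  have hz0 : (g z).re = 0 := le_antisymm (not_lt.1 hcon) (h z hz)
  have hmax : IsMaxOn (norm ∘ fun z => exp (-g z)) U z := fun y hy => by
    simpa [norm_exp, hz0] using h y hy
  have heq := norm_eqOn_of_isPreconnected_of_isMaxOn hUc hU hg.neg.cexp hz hmax ha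
  simp only [Function.comp_apply, norm_exp, Pi.neg_apply, neg_re, Function.const_apply, hz0,
    neg_zero, Real.exp_zero, Real.exp_eq_one_iff, neg_eq_zero] at heq
  exact hpos.ne' heq

theorem le_re_of_forall_mem_frontier_prod (hU : Bornology.IsBounded U)
    (hV : Bornology.IsBounded V) (hl : ∀ w ∈ frontier V, DiffContOnCl ℂ (fun y => K y w) U)
    (hr : ∀ y ∈ closure U, DiffContOnCl ℂ (K y) V)
    (h : ∀ y ∈ frontier U, ∀ w ∈ frontier V, c ≤ (K y w).re) {y w : ℂ} (hy : y ∈ closure U)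
    (hw : w ∈ closure V) : c ≤ (K y w).re :=
  le_re_of_forall_mem_frontier hV (hr y hy)
    (fun w hw => le_re_of_forall_mem_frontier hU (hl w hw) (fun y hy => h y hy w hw) hy) hw

theorem sphere_subset_closure_sdiff_singleton {ρ : ℝ} (hρ : 0 < ρ) (y : ℂ) :
    sphere (0 : ℂ) ρ ⊆ closure (sphere 0 ρ \ {y}) := by
  intro w hw
  rcases eq_or_ne w y with rfl | hne
  · have hnontrivial : (sphere (0 : ℂ) ρ).Nontrivial :=
      ⟨w, hw, -w, by simpa using hw, self_ne_neg.2 (ne_of_mem_sphere hw hρ.ne')⟩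
    exact mem_closure_iff_clusterPt.2 <| accPt_principal_iff_clusterPt.1 <|
      (isPreconnected_sphere (by simp) 0 ρ).preperfect_of_nontrivial hnontrivial w hw
  · exact subset_closure ⟨hw, hne⟩

theorem le_re_of_forall_norm_eq
    (hl : ∀ w ∈ ball 0 R, DifferentiableOn ℂ (fun y => K y w) (ball 0 R))
    (hr : ∀ y ∈ ball 0 R, DifferentiableOn ℂ (K y) (ball 0 R))
    (h : ∀ y ∈ ball 0 R, ∀ w ∈ ball 0 R, ‖y‖ = ‖w‖ → y ≠ w → c ≤ (K y w).re) {y w : ℂ}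
    (hy : y ∈ ball 0 R) (hw : w ∈ ball 0 R) : c ≤ (K y w).re := by
  rw [mem_ball_zero_iff] at hy hw
  obtain ⟨ρ, hρ, hρR⟩ := exists_between (max_lt hy hw)
  obtain ⟨hyρ, hwρ⟩ := max_lt_iff.1 hρ
  have hρ0 : 0 < ρ := (norm_nonneg y).trans_lt hyρ
  have hsub : closedBall (0 : ℂ) ρ ⊆ ball 0 R := closedBall_subset_ball hρR
  have hsph : sphere (0 : ℂ) ρ ⊆ ball 0 R := sphere_subset_closedBall.trans hsub
  refine le_re_of_forall_mem_frontier_prod (isBounded_ball (x := 0) (r := ρ))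
    (isBounded_ball (x := 0) (r := ρ)) (fun w hw => ?_) (fun y hy => ?_) (fun y hy w hw => ?_)
    (subset_closure (mem_ball_zero_iff.2 hyρ)) (subset_closure (mem_ball_zero_iff.2 hwρ))
  · rw [frontier_ball 0 hρ0.ne'] at hw
    exact (hl w (hsph hw)).diffContOnCl_ball hsub
  · rw [closure_ball 0 hρ0.ne'] at hy
    exact (hr y (hsub hy)).diffContOnCl_ball hsub
  rw [frontier_ball 0 hρ0.ne'] at hy hw
  have hcont : ContinuousOn (fun w => (K y w).re) (closure (sphere 0 ρ \ {y})) :=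
    continuous_re.comp_continuousOn ((hr y (hsph hy)).continuousOn.mono
      ((closure_minimal sdiff_subset isClosed_sphere).trans hsph))
  refine le_on_closure (fun w hw => ?_) continuousOn_const hcont
    (sphere_subset_closure_sdiff_singleton hρ0 y hw)
  exact h y (hsph hy) w (hsph hw.1)
    ((mem_sphere_zero_iff_norm.1 hy).trans (mem_sphere_zero_iff_norm.1 hw.1).symm) (Ne.symm hw.2)

end MinimumPrinciple

/-! ### Starlike factors -/

theorem differentiableOn_conj_comp_conj {f : ℂ → ℂ} {R : ℝ} (hf : DifferentiableOn ℂ f (ball 0 R)) :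
    DifferentiableOn ℂ (fun z => conj (f (conj z))) (ball 0 R) := fun z hz => by
  have hz' : conj z ∈ ball 0 R := by simpa using hz
  simpa [Function.comp_def] using
    (hf.differentiableAt (isOpen_ball.mem_nhds hz')).conj_conj.differentiableWithinAt

section Rotation

theorem exists_eq_mul_exp_of_norm_eq {y w : ℂ} (hw : w ≠ 0) (h : ‖y‖ = ‖w‖) :
    ∃ θ ∈ Ioc 0 (2 * Real.pi), y = w * exp (θ * I) := by
  have hmem : y / w ∈ sphere (0 : ℂ) |1| := by
    simp [h, div_self (norm_ne_zero_iff.2 hw)]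
  rw [← image_circleMap_Ioc] at hmem
  obtain ⟨θ, hθ, hyw⟩ := hmem
  refine ⟨θ, hθ, ?_⟩
  rw [circleMap_zero, ofReal_one, one_mul] at hyw
  rw [hyw, mul_div_cancel₀ _ hw]

theorem mul_exp_ofReal_mul_I_mem_ball {w : ℂ} {R : ℝ} (hw : w ∈ ball 0 R) (θ : ℝ) :
    w * exp (θ * I) ∈ ball 0 R := by
  simpa [norm_exp_ofReal_mul_I] using hw

theorem hasDerivAt_comp_mul_exp {f : ℂ → ℂ} {f' w : ℂ} {θ : ℝ}
    (hf : HasDerivAt f f' (w * exp (θ * I))) :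
    HasDerivAt (fun t : ℝ => f (w * exp (t * I))) (w * exp (θ * I) * f' * I) θ := by
  have hrot : HasDerivAt (fun t : ℂ => w * exp (t * I)) (w * (exp (θ * I) * (1 * I))) (θ : ℂ) :=
    (((hasDerivAt_id (θ : ℂ)).mul_const I).cexp).const_mul w
  exact (HasDerivAt.comp (θ : ℂ) hf hrot).comp_ofReal.congr_deriv (by ring)

theorem monotone_im_comp_mul_exp_add {L L' : ℂ → ℂ} {c R : ℝ}
    (hL : ∀ z ∈ ball 0 R, HasDerivAt L (L' z) z) (h : ∀ z ∈ ball 0 R, -c ≤ (z * L' z).re)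
    {w : ℂ} (hw : w ∈ ball 0 R) :
    Monotone fun θ : ℝ => (L (w * exp (θ * I))).im + c * θ := by
  refine monotone_of_hasDerivAt_nonneg (f' := fun θ : ℝ =>
    (w * exp (θ * I) * L' (w * exp (θ * I))).re + c) (fun θ => ?_) (fun θ => ?_)
  · have hLθ := hasDerivAt_comp_mul_exp (hL _ (mul_exp_ofReal_mul_I_mem_ball hw θ))
    refine ((imCLM.hasFDerivAt.comp_hasDerivAt θ hLθ).add
      ((hasDerivAt_id θ).const_mul c)).congr_deriv ?_
    rw [imCLM_apply, mul_I_im, mul_one]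
  · exact neg_le_iff_add_nonneg.1 (h _ (mul_exp_ofReal_mul_I_mem_ball hw θ))

theorem one_sub_exp_two_mul_mul_I (z : ℂ) :
    1 - exp (2 * z * I) = 2 * sin z * (-I * exp (z * I)) := by
  rw [mul_assoc, two_mul (z * I), exp_add, exp_mul_I]
  linear_combination -sin_sq_add_cos_sq z + sin z ^ 2 * I_sq

theorem nonneg_of_hasDerivAt_mul_sin {u ρ χ : ℝ → ℝ} {a b θ : ℝ}
    (hu : ∀ t, HasDerivAt u (ρ t * Real.sin (χ t)) t) (hρ : ∀ t, 0 ≤ ρ t) (hχ : Monotone χ)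
    (hχa : 0 ≤ χ a) (hχb : χ b ≤ 2 * Real.pi) (hua : 0 ≤ u a) (hub : 0 ≤ u b)
    (hθ : θ ∈ Icc a b) : 0 ≤ u θ := by
  have hcont : Continuous u := continuous_iff_continuousAt.2 fun t => (hu t).continuousAt
  -- `u` increases while `χ ≤ π` and decreases afterwards, so it is smallest at an endpoint.
  rcases le_total (χ θ) Real.pi with hπ | hπ
  · have hmono : MonotoneOn u (Icc a θ) := by
      refine monotoneOn_of_hasDerivWithinAt_nonneg (convex_Icc a θ) hcont.continuousOn
        (fun t _ => (hu t).hasDerivWithinAt) fun t ht => ?_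
      rw [interior_Icc] at ht
      exact mul_nonneg (hρ t) (Real.sin_nonneg_of_nonneg_of_le_pi
        (hχa.trans (hχ ht.1.le)) ((hχ ht.2.le).trans hπ))
    exact hua.trans (hmono (left_mem_Icc.2 hθ.1) (right_mem_Icc.2 hθ.1) hθ.1)
  · have hanti : AntitoneOn u (Icc θ b) := by
      refine antitoneOn_of_hasDerivWithinAt_nonpos (convex_Icc θ b) hcont.continuousOn
        (fun t _ => (hu t).hasDerivWithinAt) fun t ht => ?_
      rw [interior_Icc] at ht
      have hsin : 0 ≤ Real.sin (χ t - Real.pi) := Real.sin_nonneg_of_nonneg_of_le_pi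
        (by linarith [hχ ht.1.le]) (by linarith [hχ ht.2.le])
      rw [Real.sin_sub_pi, Left.nonneg_neg_iff] at hsin
      exact mul_nonpos_of_nonneg_of_nonpos (hρ t) hsin
    exact hub.trans (hanti (left_mem_Icc.2 hθ.2) (right_mem_Icc.2 hθ.2) hθ.2)

end Rotation

theorem exists_exp_eq_of_ne_zero {H : ℂ → ℂ} {c : ℂ} {R : ℝ} (hH : DifferentiableOn ℂ H (ball c R))
    (hne : ∀ z ∈ ball c R, H z ≠ 0) :
    ∃ L : ℂ → ℂ, ∀ z ∈ ball c R, HasDerivAt L (logDeriv H z) z ∧ exp (L z) = H z := by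
  obtain ⟨M, hM⟩ := ((hH.deriv isOpen_ball).div hH hne).isExactOn_ball
  have hlog : EqOn (logDeriv H) (logDeriv fun z => exp (M z)) (ball c R) := fun z hz => by
    have hexp : exp (M z) ≠ 0 := exp_ne_zero _
    simp [logDeriv_apply, (hM z hz).cexp.deriv, hexp]
  have hdiff : DifferentiableOn ℂ (fun z => exp (M z)) (ball c R) :=
    fun z hz => (hM z hz).cexp.differentiableAt.differentiableWithinAt
  obtain ⟨k, hk, hkH⟩ := (logDeriv_eqOn_iff hH hdiff isOpen_ball (convex_ball c R).isPreconnected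
    (fun z _ => exp_ne_zero _) hne).1 hlog
  refine ⟨fun z => M z + log k, fun z hz => ⟨(hM z hz).add_const _, ?_⟩⟩
  rw [exp_add, exp_log hk, hkH hz, Pi.smul_apply, smul_eq_mul, mul_comm]

/-- The function `H z = f z / z` attached to an analytic `f` with `f 0 = 0 ≠ f' 0` that is starlike
of order `α` on the disc of radius `R`. As `z f' z / f z = 1 + z H' z / H z`, dividing by `z` turns
starlikeness into a condition which also makes sense at the origin. -/
structure IsStarlikeFactor (α R : ℝ) (H : ℂ → ℂ) : Prop where
  differentiableOn : DifferentiableOn ℂ H (ball 0 R)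
  ne_zero : ∀ z ∈ ball 0 R, H z ≠ 0
  lt_re : ∀ z ∈ ball 0 R, α - 1 < (z * logDeriv H z).re

namespace IsStarlikeFactor

variable {α R : ℝ} {H V : ℂ → ℂ}

theorem congr {G : ℂ → ℂ} (hH : IsStarlikeFactor α R H) (h : EqOn G H (ball 0 R)) :
    IsStarlikeFactor α R G where
  differentiableOn := hH.differentiableOn.congr h
  ne_zero z hz := h hz ▸ hH.ne_zero z hz
  lt_re z hz := by
    rw [logDeriv_apply, (h.eventuallyEq_of_mem (isOpen_ball.mem_nhds hz)).deriv_eq, h hz]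
    exact hH.lt_re z hz

theorem comp_const_mul (hH : IsStarlikeFactor α R H) {c : ℂ} {r : ℝ}
    (hc : ∀ y ∈ ball 0 r, c * y ∈ ball 0 R) : IsStarlikeFactor α r fun y => H (c * y) where
  differentiableOn := hH.differentiableOn.comp (by fun_prop) hc
  ne_zero y hy := hH.ne_zero _ (hc y hy)
  lt_re y hy := by
    have hH' : DifferentiableAt ℂ H (c * y) :=
      hH.differentiableOn.differentiableAt (isOpen_ball.mem_nhds (hc y hy))
    have hderiv : logDeriv (fun y => H (c * y)) y = logDeriv H (c * y) * c := by
      simpa [Function.comp_def] using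
        logDeriv_comp (g := fun y => c * y) hH' (by fun_prop)
    rw [hderiv, mul_left_comm, mul_comm, mul_assoc, mul_left_comm, ← mul_assoc]
    exact hH.lt_re _ (hc y hy)

theorem exists_sq_eq (hH : IsStarlikeFactor 0 R H) :
    ∃ V, IsStarlikeFactor (1 / 2) R V ∧ ∀ z ∈ ball 0 R, V z ^ 2 = H z := by
  obtain ⟨L, hL⟩ := exists_exp_eq_of_ne_zero hH.differentiableOn hH.ne_zero
  have hV : ∀ z ∈ ball 0 R, HasDerivAt (fun z => exp (L z / 2))
      (exp (L z / 2) * (logDeriv H z / 2)) z := fun z hz => ((hL z hz).1.div_const 2).cexp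
  refine ⟨fun z => exp (L z / 2),
    ⟨fun z hz => (hV z hz).differentiableAt.differentiableWithinAt, fun z _ => exp_ne_zero _,
      fun z hz => ?_⟩, fun z hz => ?_⟩
  · rw [logDeriv_apply, (hV z hz).deriv, mul_div_cancel_left₀ _ (exp_ne_zero _), ← mul_div_assoc,
      div_ofNat_re]
    linarith [hH.lt_re z hz]
  · rw [← exp_nat_mul, ← (hL z hz).2]
    congr 1
    push_cast
    ring

theorem exists_polar (hH : IsStarlikeFactor α R H) {w : ℂ} (hw : w ∈ ball 0 R) :
    ∃ ρ χ : ℝ → ℝ, (∀ θ, 0 < ρ θ) ∧ Monotone χ ∧ χ 0 = 0 ∧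
      χ (2 * Real.pi) = (1 - α) * (2 * Real.pi) ∧
      ∀ θ : ℝ, exp (((1 - α) * θ : ℝ) * I) * H (w * exp (θ * I)) =
        H w * (ρ θ * exp (χ θ * I)) := by
  obtain ⟨L, hL⟩ := exists_exp_eq_of_ne_zero hH.differentiableOn hH.ne_zero
  have hmono := monotone_im_comp_mul_exp_add (fun z hz => (hL z hz).1) (c := 1 - α)
    (fun z hz => by linarith [hH.lt_re z hz]) hw
  refine ⟨fun θ => Real.exp ((L (w * exp (θ * I)) - L w).re),
    fun θ => (L (w * exp (θ * I)) - L w).im + (1 - α) * θ, fun θ => Real.exp_pos _,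
    fun θ₁ θ₂ h => ?_, ?_, ?_, fun θ => ?_⟩
  · simpa only [sub_im, sub_add_eq_add_sub, sub_le_sub_iff_right] using hmono h
  · simp
  · simp [exp_two_pi_mul_I]
  · rw [← (hL _ (mul_exp_ofReal_mul_I_mem_ball hw θ)).2, ← (hL w hw).2, ofReal_exp, ← exp_add,
      ← exp_add, ← exp_add]
    congr 1
    conv_lhs => rw [← sub_add_cancel (L (w * exp (θ * I))) (L w),
      ← re_add_im (L (w * exp (θ * I)) - L w)]
    push_cast
    ring

theorem re_div_mul_one_sub_div_nonneg (hV : IsStarlikeFactor (1 / 2) R V) {y w : ℂ}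
    (hw : w ∈ ball 0 R) (hw0 : w ≠ 0) (hyw : ‖y‖ = ‖w‖) :
    0 ≤ (V y / V w * (1 - y / w)).re := by
  obtain ⟨θ, hθ, rfl⟩ := exists_eq_mul_exp_of_norm_eq hw0 hyw
  obtain ⟨ρ, χ, hρ, hmono, hχ0, hχ1, hpolar⟩ := hV.exists_polar hw
  have hsinχ : 0 ≤ Real.sin (χ θ) := Real.sin_nonneg_of_nonneg_of_le_pi
    (hχ0.symm.trans_le (hmono hθ.1.le)) ((hmono hθ.2).trans (by linarith))
  have hsinθ : 0 ≤ Real.sin (θ / 2) :=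
    Real.sin_nonneg_of_nonneg_of_le_pi (by linarith [hθ.1]) (by linarith [hθ.2])
  have hone_sub : 1 - exp (θ * I) = 2 * sin (θ / 2) * (-I * exp (θ / 2 * I)) := by
    rw [← one_sub_exp_two_mul_mul_I, mul_div_cancel₀ _ two_ne_zero]
  have hval : V (w * exp (θ * I)) / V w * (1 - w * exp (θ * I) / w) =
      (ρ θ * (2 * Real.sin (θ / 2)) : ℝ) * (-I * exp (χ θ * I)) := by
    have hpol := hpolar θ
    rw [show (((1 - 1 / 2) * θ : ℝ) : ℂ) = θ / 2 by push_cast; ring] at hpol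
    rw [mul_div_cancel_left₀ _ hw0, hone_sub, div_mul_eq_mul_div, div_eq_iff (hV.ne_zero w hw)]
    push_cast
    linear_combination -(2 * sin (θ / 2)) * I * hpol
  rw [hval, re_ofReal_mul]
  have hre : (-I * exp (χ θ * I)).re = Real.sin (χ θ) := by
    simp [exp_ofReal_mul_I_re, exp_ofReal_mul_I_im]
  rw [hre]
  exact mul_nonneg (mul_nonneg (hρ θ).le (by positivity)) hsinχ

theorem re_primitive_sub_div_nonneg (hH : IsStarlikeFactor 0 R H) {f : ℂ → ℂ}
    (hf : ∀ z ∈ ball 0 R, HasDerivAt f (H z) z) {y w : ℂ} (hy : y ∈ ball 0 R) (hy0 : y ≠ 0)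
    (hyw : ‖y‖ = ‖w‖) : 0 ≤ ((f y - f w) / (y * H y)).re := by
  obtain ⟨θ, hθ, rfl⟩ := exists_eq_mul_exp_of_norm_eq hy0 hyw.symm
  obtain ⟨ρ, χ, hρ, hmono, hχ0, hχ1, hpolar⟩ := hH.exists_polar hy
  refine nonneg_of_hasDerivAt_mul_sin (a := 0) (b := 2 * Real.pi)
    (u := fun t => ((f y - f (y * exp (t * I))) / (y * H y)).re) (fun t => ?_) (fun t => (hρ t).le)
    hmono hχ0.ge (by rw [hχ1, sub_zero, one_mul]) (by simp) (by simp [exp_two_pi_mul_I])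
    (Ioc_subset_Icc_self hθ)
  have hft := hasDerivAt_comp_mul_exp (hf _ (mul_exp_ofReal_mul_I_mem_ball hy t))
  refine (reCLM.hasFDerivAt.comp_hasDerivAt t
    ((hft.const_sub (f y)).div_const (y * H y))).congr_deriv ?_
  have hpol := hpolar t
  rw [sub_zero, one_mul] at hpol
  have hval : -(y * exp (t * I) * H (y * exp (t * I)) * I) / (y * H y) =
      ρ t * (-I * exp (χ t * I)) := by
    rw [mul_assoc y, hpol]
    have := hH.ne_zero y hy
    field_simp
  rw [hval, reCLM_apply, re_ofReal_mul]
  simp [exp_ofReal_mul_I_re, exp_ofReal_mul_I_im]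

theorem re_kernel_nonneg_of_norm_eq (hV : IsStarlikeFactor (1 / 2) R V) {t : ℝ} {z b : ℂ}
    (ht : 0 < t) (htR : t < R) (hz : ‖z‖ = t) (hb : ‖b‖ = t) :
    0 ≤ (V z * conj (V b) * (1 - conj b * z / t ^ 2)).re := by
  have hb0 : b ≠ 0 := norm_pos_iff.1 (hb ▸ ht)
  have hbR : b ∈ ball 0 R := mem_ball_zero_iff.2 (hb ▸ htR)
  have hVb : V b ≠ 0 := hV.ne_zero b hbR
  have hbb : conj b * b = t ^ 2 := by rw [conj_mul', hb]
  have hkernel : V z * conj (V b) * (1 - conj b * z / t ^ 2) =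
      (‖V b‖ ^ 2 : ℝ) * (V z / V b * (1 - z / b)) := by
    rw [← hbb, ofReal_pow, ← conj_mul']
    have : conj b ≠ 0 := (map_ne_zero _).2 hb0
    field_simp
  rw [hkernel, re_ofReal_mul]
  exact mul_nonneg (sq_nonneg _) (hV.re_div_mul_one_sub_div_nonneg hbR hb0 (hz.trans hb.symm))

theorem re_kernel_pos (hV : IsStarlikeFactor (1 / 2) R V) {t : ℝ} {z b : ℂ} (htR : t < R)
    (hz : z ∈ ball 0 t) (hb : b ∈ ball 0 t) :
    0 < (V z * conj (V b) * (1 - conj b * z / t ^ 2)).re := by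
  have ht : 0 < t := pos_of_mem_ball hz
  have hsub : closedBall (0 : ℂ) t ⊆ ball 0 R := closedBall_subset_ball htR
  have hdiff : ∀ b : ℂ, DifferentiableOn ℂ
      (fun z => V z * conj (V (conj b)) * (1 - b * z / t ^ 2)) (ball 0 R) := fun b =>
    (hV.differentiableOn.mul_const _).mul (by fun_prop)
  have hdiff' : ∀ z : ℂ, DifferentiableOn ℂ
      (fun b => V z * conj (V (conj b)) * (1 - b * z / t ^ 2)) (ball 0 R) := fun z =>
    ((differentiableOn_conj_comp_conj hV.differentiableOn).const_mul _).mul (by fun_prop)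
  have hnonneg : ∀ z ∈ ball 0 t, ∀ b ∈ ball 0 t,
      0 ≤ (V z * conj (V b) * (1 - conj b * z / t ^ 2)).re := fun z hz b hb => by
    have hb' : conj b ∈ ball 0 t := by simpa using hb
    simpa only [conj_conj] using le_re_of_forall_mem_frontier_prod
      (K := fun z b => V z * conj (V (conj b)) * (1 - b * z / t ^ 2)) isBounded_ball isBounded_ball
      (fun b _ => (hdiff b).diffContOnCl_ball hsub) (fun z _ => (hdiff' z).diffContOnCl_ball hsub)
      (fun z hz b hb => by
        rw [frontier_ball 0 ht.ne', mem_sphere_zero_iff_norm] at hz hb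
        simpa only [conj_conj] using
          hV.re_kernel_nonneg_of_norm_eq (b := conj b) ht htR hz (by rwa [norm_conj]))
      (subset_closure hz) (subset_closure hb')
  have hdiag : 0 < (V b * conj (V b) * (1 - conj b * b / t ^ 2)).re := by
    have hlt : ‖b‖ ^ 2 / t ^ 2 < 1 := by
      rw [div_lt_one (by positivity)]
      exact pow_lt_pow_left₀ (mem_ball_zero_iff.1 hb) (norm_nonneg b) two_ne_zero
    have hVb : 0 < ‖V b‖ := norm_pos_iff.2 (hV.ne_zero b (ball_subset_ball htR.le hb))
    rw [mul_conj', conj_mul']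
    exact_mod_cast mul_pos (pow_pos hVb 2) (sub_pos.2 hlt)
  refine re_pos_of_re_nonneg isOpen_ball (convex_ball 0 t).isPreconnected
    (g := fun z => V z * conj (V b) * (1 - conj b * z / t ^ 2)) ?_ (fun z hz => hnonneg z hz b hb)
    hb hdiag hz
  simpa only [conj_conj] using (hdiff (conj b)).mono (ball_subset_ball htR.le)

theorem exists_re_mul_one_add_mul_pos (hV : IsStarlikeFactor (1 / 2) R V) {t : ℝ} (htR : t < R)
    {x : ℂ} (hx : ‖x‖ < t⁻¹) :
    ∃ c : ℂ, ∀ z ∈ ball 0 t, 0 < (c * ((1 + x * z) * V z)).re := by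
  have ht : 0 < t := inv_pos.1 ((norm_nonneg x).trans_lt hx)
  have htC : (t : ℂ) ≠ 0 := ofReal_ne_zero.2 ht.ne'
  have hb : -conj x * t ^ 2 ∈ ball 0 t := by
    have hxt : ‖x‖ * t < 1 := (lt_div_iff₀ ht).1 (by rwa [one_div])
    rw [mem_ball_zero_iff, norm_mul, norm_neg, norm_conj, norm_pow, norm_real,
      Real.norm_of_nonneg ht.le, sq, ← mul_assoc]
    exact mul_lt_of_lt_one_left ht hxt
  refine ⟨conj (V (-conj x * t ^ 2)), fun z hz => ?_⟩
  convert hV.re_kernel_pos htR hz hb using 2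
  rw [map_mul, map_neg, conj_conj, map_pow, conj_ofReal]
  field_simp
  ring

end IsStarlikeFactor

/-! ### Functionals on continuous functions on a closed disk -/

/-- The Banach algebra of continuous functions on the closed disk of radius `s` about `0`. No
holomorphy inside the disk is required, so the algebra and its norm are those of `C(K, ℂ)`. -/
abbrev CDisc (s : ℝ) : Type := C(closedBall (0 : ℂ) s, ℂ)

namespace CDisc

variable {s : ℝ} {x y w : ℂ}

/-- The coordinate function `ζ ↦ ζ` on the closed disk. -/
def coord (s : ℝ) : CDisc s := ⟨Subtype.val, continuous_subtype_val⟩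

/-- The geometric kernel `ζ ↦ 1 / (1 - y ζ)`, defined as an inverse in the Banach algebra, hence
equal to `0` by convention when `1 - y ζ` vanishes somewhere on the disk. -/
def geom (s : ℝ) (y : ℂ) : CDisc s := Ring.inverse (1 - y • coord s)

/-- The restriction to the closed disk of a function that is continuous there, and `0` for a
function that is not. -/
def ofFun (s : ℝ) (f : ℂ → ℂ) : CDisc s := ContinuousMap.mkD ((closedBall 0 s).domRestrict f) 0

@[simp]
theorem coord_apply (ζ : closedBall (0 : ℂ) s) : coord s ζ = ζ := rfl

theorem ofFun_apply {f : ℂ → ℂ} (hf : ContinuousOn f (closedBall 0 s)) (ζ : closedBall (0 : ℂ) s) :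
    ofFun s f ζ = f ζ :=
  ContinuousMap.mkD_apply_of_continuousOn hf

theorem ofFun_congr {f g : ℂ → ℂ} (h : EqOn f g (closedBall 0 s)) : ofFun s f = ofFun s g := by
  unfold ofFun
  rw [domRestrict_eq_domRestrict_iff.2 h]

theorem ofFun_mul {f g : ℂ → ℂ} (hf : ContinuousOn f (closedBall 0 s))
    (hg : ContinuousOn g (closedBall 0 s)) :
    ofFun s (fun z => f z * g z) = ofFun s f * ofFun s g := by
  ext ζ
  rw [ContinuousMap.mul_apply, ofFun_apply hf, ofFun_apply hg]
  exact ofFun_apply (hf.mul hg) ζ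

theorem ofFun_const_mul_sub_const {p : ℂ → ℂ} (hp : ContinuousOn p (closedBall 0 s))
    (a b : ℂ) : ofFun s (fun z => a * p z - b) = a • ofFun s p - b • 1 := by
  ext ζ
  rw [ofFun_apply ((hp.const_mul a).fun_sub continuousOn_const)]
  simp [ofFun_apply hp]

theorem norm_smul_coord_lt_one (hy : y ∈ ball 0 s⁻¹) : ‖y • coord s‖ < 1 := by
  have hs : 0 < s := inv_pos.1 (pos_of_mem_ball hy)
  have hcoord : ‖coord s‖ ≤ s :=
    (ContinuousMap.norm_le _ hs.le).2 fun ζ => mem_closedBall_zero_iff.1 ζ.2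
  calc ‖y • coord s‖ ≤ ‖y‖ * s := by
        rw [norm_smul]
        exact mul_le_mul_of_nonneg_left hcoord (norm_nonneg y)
    _ < 1 := by rwa [mem_ball_zero_iff, ← one_div, lt_div_iff₀ hs] at hy

theorem one_sub_smul_coord_mul_geom (hy : y ∈ ball 0 s⁻¹) :
    (1 - y • coord s) * geom s y = 1 :=
  Ring.mul_inverse_cancel _ (isUnit_one_sub_of_norm_lt_one (norm_smul_coord_lt_one hy))

theorem geom_apply (hy : y ∈ ball 0 s⁻¹) (ζ : closedBall (0 : ℂ) s) :
    geom s y ζ = (1 - y * ζ)⁻¹ :=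
  eq_inv_of_mul_eq_one_right (congrArg (fun u => u ζ) (one_sub_smul_coord_mul_geom hy))

@[simp]
theorem geom_zero : geom s 0 = 1 := by simp [geom]

theorem hasSum_geom (hy : y ∈ ball 0 s⁻¹) : HasSum (fun n : ℕ => (y • coord s) ^ n) (geom s y) := by
  rw [geom, ← geom_series_eq_inverse _ (norm_smul_coord_lt_one hy)]
  exact (summable_geometric_of_norm_lt_one (norm_smul_coord_lt_one hy)).hasSum

theorem hasDerivAt_geom (hy : y ∈ ball 0 s⁻¹) :
    HasDerivAt (geom s) (coord s * geom s y ^ 2) y := by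
  have hsub : HasDerivAt (fun y : ℂ => 1 - y • coord s) (-coord s) y := by
    simpa using ((hasDerivAt_id y).smul_const (coord s)).const_sub 1
  have hunit := Units.val_oneSub _ (norm_smul_coord_lt_one hy)
  have hinv := hasFDerivAt_ringInverse (𝕜 := ℂ) (Units.oneSub _ (norm_smul_coord_lt_one hy))
  rw [hunit] at hinv
  refine (hinv.comp_hasDerivAt y hsub).congr_deriv ?_
  rw [← Ring.inverse_unit, hunit]
  simp only [geom, neg_apply, ContinuousLinearMap.mulLeftRight_apply]
  ring

theorem geom_mul_geom (hy : y ∈ ball 0 s⁻¹) (hw : w ∈ ball 0 s⁻¹) :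
    (y - w) • (geom s y * geom s w) = y • geom s y - w • geom s w := by
  have hy' := one_sub_smul_coord_mul_geom hy
  have hw' := one_sub_smul_coord_mul_geom hw
  simp only [Algebra.smul_def, map_sub] at *
  linear_combination -(algebraMap ℂ (CDisc s) w * geom s w) * hy' +
    algebraMap ℂ (CDisc s) y * geom s y * hw'

theorem geom_sq (hy : y ∈ ball 0 s⁻¹) :
    geom s y ^ 2 = geom s y + y • (coord s * geom s y ^ 2) := by
  have hy' := one_sub_smul_coord_mul_geom hy
  simp only [Algebra.smul_def] at *
  linear_combination geom s y * hy'

theorem geom_mul_one_add (hy : y ∈ ball 0 s⁻¹) :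
    geom s y * (1 + (x * y) • coord s) = geom s y + x • (geom s y - 1) := by
  have hy' := one_sub_smul_coord_mul_geom hy
  simp only [Algebra.smul_def, map_mul] at *
  linear_combination -(algebraMap ℂ (CDisc s) x) * hy'

theorem geom_sq_mul_one_add (hy : y ∈ ball 0 s⁻¹) :
    geom s y ^ 2 * (1 + x • coord s) = geom s y + (y + x) • (coord s * geom s y ^ 2) := by
  have hy' := one_sub_smul_coord_mul_geom hy
  simp only [Algebra.smul_def, map_add] at *
  linear_combination geom s y * hy'

theorem hasDerivAt_apply_geom (μ : CDisc s →L[ℂ] ℂ) (hy : y ∈ ball 0 s⁻¹) :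
    HasDerivAt (fun y => μ (geom s y)) (μ (coord s * geom s y ^ 2)) y :=
  μ.hasFDerivAt.comp_hasDerivAt y (hasDerivAt_geom hy)

theorem hasDerivAt_mul_apply_geom (μ : CDisc s →L[ℂ] ℂ) (hy : y ∈ ball 0 s⁻¹) :
    HasDerivAt (fun y => y * μ (geom s y)) (μ (geom s y ^ 2)) y := by
  refine ((hasDerivAt_id y).mul (hasDerivAt_apply_geom μ hy)).congr_deriv ?_
  have hsq := congrArg μ (geom_sq hy)
  simp only [map_add, map_smul, smul_eq_mul] at hsq
  rw [hsq, id, one_mul]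

theorem differentiableOn_geom : DifferentiableOn ℂ (geom s) (ball 0 s⁻¹) := fun _ hy =>
  (hasDerivAt_geom hy).differentiableAt.differentiableWithinAt

theorem differentiableOn_comp_geom (μ : CDisc s →L[ℂ] ℂ) :
    DifferentiableOn ℂ (fun y => μ (geom s y)) (ball 0 s⁻¹) :=
  μ.differentiable.comp_differentiableOn differentiableOn_geom

end CDisc

/-! ### Herglotz functionals -/

namespace CDisc

variable {s t R : ℝ} {p m : ℂ → ℂ}

theorem inv_mem_ball_inv (hs : 0 < s) (hst : s < t) {η : ℂ} (hη : η ∈ sphere (0 : ℂ) t) :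
    η⁻¹ ∈ ball (0 : ℂ) s⁻¹ := by
  rw [mem_ball_zero_iff, norm_inv, mem_sphere_zero_iff_norm.1 hη]
  gcongr

theorem continuousOn_geom_inv (hs : 0 < s) (hst : s < t) :
    ContinuousOn (fun η => geom s η⁻¹) (sphere 0 t) :=
  differentiableOn_geom.continuousOn.comp
    (continuousOn_inv₀.mono fun _ hη => ne_of_mem_sphere hη (hs.trans hst).ne')
    fun _ hη => inv_mem_ball_inv hs hst hη

theorem circleIntegrable_smul_geom_inv (hs : 0 < s) (hst : s < t) (htR : t < R)
    (hp : ContinuousOn p (ball 0 R)) : CircleIntegrable (fun η => p η • geom s η⁻¹) 0 t :=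
  ((hp.mono (sphere_subset_ball htR)).smul
    (continuousOn_geom_inv hs hst)).circleIntegrable (hs.trans hst).le

theorem ofFun_eq_circleAverage (hs : 0 < s) (hst : s < t) (htR : t < R)
    (hp : DifferentiableOn ℂ p (ball 0 R)) :
    ofFun s p = circleAverage (fun η => p η • geom s η⁻¹) 0 t := by
  have ht : 0 < t := hs.trans hst
  have hint := circleIntegrable_smul_geom_inv hs hst htR hp.continuousOn
  ext ζ
  have hζ : (ζ : ℂ) ∈ ball 0 |t| := by
    rw [abs_of_pos ht]
    exact closedBall_subset_ball hst ζ.2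
  rw [ofFun_apply (hp.continuousOn.mono (closedBall_subset_ball (hst.trans htR))),
    ← ContinuousMap.evalCLM_apply ℝ ζ, ← ContinuousLinearMap.circleAverage_comp_comm _ hint,
    ← DiffContOnCl.circleAverage_smul_div (hp.diffContOnCl_ball ?_) hζ]
  · refine circleAverage_congr_sphere fun η hη => ?_
    rw [abs_of_pos ht] at hη
    have hη0 : η ≠ 0 := ne_of_mem_sphere hη ht.ne'
    simp only [Function.comp_apply, ContinuousMap.evalCLM_apply, ContinuousMap.smul_apply,
      geom_apply (inv_mem_ball_inv hs hst hη), sub_zero, smul_eq_mul]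
    rw [mul_comm, ← inv_div, sub_div, div_self hη0, inv_mul_eq_div]
  · rw [abs_of_pos ht]
    exact closedBall_subset_ball htR

theorem apply_ofFun_eq_circleAverage (μ : CDisc s →L[ℂ] ℂ) (hs : 0 < s) (hst : s < t) (htR : t < R)
    (hp : DifferentiableOn ℂ p (ball 0 R)) :
    μ (ofFun s p) = circleAverage (fun η => p η * μ (geom s η⁻¹)) 0 t := by
  have hμ := ContinuousLinearMap.circleAverage_comp_comm (μ.restrictScalars ℝ)
    (circleIntegrable_smul_geom_inv hs hst htR hp.continuousOn)
  rw [← ofFun_eq_circleAverage hs hst htR hp] at hμ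
  refine hμ.symm.trans (congrArg (circleAverage · 0 t) (funext fun η => ?_))
  simp

theorem circleAverage_mul_conj_comp_inv (hs : 0 < s) (hst : s < t) (htR : t < R)
    (hp : DifferentiableOn ℂ p (ball 0 R)) (hm : DifferentiableOn ℂ m (ball 0 s⁻¹)) :
    circleAverage (fun η => p η * conj (m η⁻¹)) 0 t = p 0 * conj (m 0) := by
  have ht : 0 < t := hs.trans hst
  -- On the circle of radius `t`, the conjugate of `η⁻¹` is `η / t ^ 2`.
  have hcongr : EqOn (fun η => p η * conj (m η⁻¹)) (fun η => p η * conj (m (conj (η / t ^ 2))))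
      (sphere 0 |t|) := fun η hη => by
    rw [abs_of_pos ht] at hη
    have hη0 : η ≠ 0 := ne_of_mem_sphere hη ht.ne'
    have hinv : conj (η / t ^ 2) = η⁻¹ := by
      rw [← mem_sphere_zero_iff_norm.1 hη, ← conj_mul', div_mul_cancel_right₀ hη0, map_inv₀,
        conj_conj]
    simp only [hinv]
  have hmaps : MapsTo (fun η : ℂ => η / t ^ 2) (closedBall 0 t) (ball 0 s⁻¹) := fun η hη => by
    rw [mem_ball_zero_iff, norm_div, norm_pow, norm_real, Real.norm_of_nonneg ht.le]
    calc ‖η‖ / t ^ 2 ≤ t / t ^ 2 := by gcongr; exact mem_closedBall_zero_iff.1 hη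
      _ = t⁻¹ := by field_simp
      _ < s⁻¹ := by gcongr
  have hdiff : DiffContOnCl ℂ (fun η => p η * conj (m (conj (η / t ^ 2)))) (ball 0 t) := by
    have hconj := differentiableOn_conj_comp_conj hm
    have hcl : closure (ball (0 : ℂ) t) ⊆ closedBall 0 t := closure_ball_subset_closedBall
    refine ⟨(hp.mono (ball_subset_ball htR.le)).mul (hconj.comp (by fun_prop)
      (hmaps.mono_left ball_subset_closedBall)), ContinuousOn.mul ?_ ?_⟩
    · exact hp.continuousOn.mono (hcl.trans (closedBall_subset_ball htR))
    · exact hconj.continuousOn.comp (by fun_prop) (hmaps.mono_left hcl)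
  rw [circleAverage_congr_sphere hcongr, DiffContOnCl.circleAverage (by rwa [abs_of_pos ht])]
  simp

/-- The Herglotz property of a functional `μ`: on the geometric kernels, whose coefficients are all
`1`, the normalized functional `μ / μ 1` has real part at least `1 / 2`. Such a `μ` has `μ 1 ≠ 0`
when `0 < s`, because otherwise the quotient is `0` by convention. -/
def IsHerglotz (μ : CDisc s →L[ℂ] ℂ) : Prop :=
  ∀ w ∈ ball 0 s⁻¹, 1 / 2 ≤ (μ (geom s w) / μ 1).re

namespace IsHerglotz

variable {μ : CDisc s →L[ℂ] ℂ}

theorem apply_one_ne_zero (hμ : IsHerglotz μ) (hs : 0 < s) : μ 1 ≠ 0 := fun h => by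
  have h0 := hμ 0 (mem_ball_self (inv_pos.2 hs))
  norm_num [h] at h0

theorem apply_ofFun_div (hμ : IsHerglotz μ) (hs : 0 < s) (hst : s < t) (htR : t < R)
    (hp : DifferentiableOn ℂ p (ball 0 R)) :
    μ (ofFun s p) / μ 1 =
      circleAverage (fun η => ((2 * (μ (geom s η⁻¹) / μ 1).re - 1 : ℝ) : ℂ) * p η) 0 t := by
  have ht : 0 < t := hs.trans hst
  have hμ1 := hμ.apply_one_ne_zero hs
  set m : ℂ → ℂ := fun w => μ (geom s w) / μ 1 with hm_def
  have hm : DifferentiableOn ℂ m (ball 0 s⁻¹) := (differentiableOn_comp_geom μ).div_const _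
  have hm0 : m 0 = 1 := by rw [hm_def]; simp [hμ1]
  have hpc : ContinuousOn p (sphere 0 t) := hp.continuousOn.mono (sphere_subset_ball htR)
  have hmc : ContinuousOn (fun η => m η⁻¹) (sphere 0 t) :=
    (μ.continuous.comp_continuousOn (continuousOn_geom_inv hs hst)).div_const _
  have hrep : circleAverage (fun η => p η * m η⁻¹) 0 t = μ (ofFun s p) / μ 1 := by
    have hν := apply_ofFun_eq_circleAverage ((μ 1)⁻¹ • μ) hs hst htR hp
    simp only [smul_apply, smul_eq_mul, ← div_eq_inv_mul] at hν
    exact hν.symm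
  have hpavg : circleAverage p 0 t = p 0 :=
    DiffContOnCl.circleAverage
      (hp.diffContOnCl_ball (by rw [abs_of_pos ht]; exact closedBall_subset_ball htR))
  have hconj := circleAverage_mul_conj_comp_inv hs hst htR hp hm
  rw [hm0, map_one, mul_one] at hconj
  have hint₁ : CircleIntegrable (fun η => p η * m η⁻¹) 0 t := (hpc.mul hmc).circleIntegrable ht.le
  have hint₂ : CircleIntegrable (fun η => p η * conj (m η⁻¹)) 0 t :=
    (hpc.mul (continuous_conj.comp_continuousOn hmc)).circleIntegrable ht.le
  have hsplit : (fun η => ((2 * (m η⁻¹).re - 1 : ℝ) : ℂ) * p η) =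
      fun η => p η * m η⁻¹ + p η * conj (m η⁻¹) - p η := funext fun η => by
    rw [ofReal_sub, ← add_conj]
    push_cast
    ring
  rw [hsplit, circleAverage_fun_sub (hint₁.fun_add hint₂) (hpc.circleIntegrable ht.le),
    circleAverage_fun_add hint₁ hint₂, hrep, hconj, hpavg, add_sub_cancel_right]

theorem re_apply_ofFun_div_nonneg (hμ : IsHerglotz μ) (hs : 0 < s) (hst : s < t) (htR : t < R)
    (hp : DifferentiableOn ℂ p (ball 0 R)) (hpos : ∀ z ∈ sphere (0 : ℂ) t, 0 ≤ (p z).re) :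
    0 ≤ (μ (ofFun s p) / μ 1).re := by
  have ht : 0 < t := hs.trans hst
  have hint : CircleIntegrable
      (fun η => ((2 * (μ (geom s η⁻¹) / μ 1).re - 1 : ℝ) : ℂ) * p η) 0 t := by
    refine ContinuousOn.circleIntegrable ht.le (ContinuousOn.mul ?_ ?_)
    · have hm : ContinuousOn (fun η => μ (geom s η⁻¹)) (sphere 0 t) :=
        μ.continuous.comp_continuousOn (continuousOn_geom_inv hs hst)
      have hre := continuous_re.comp_continuousOn (hm.div_const (μ 1))
      exact continuous_ofReal.comp_continuousOn ((hre.const_mul 2).sub continuousOn_const)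
    · exact hp.continuousOn.mono (sphere_subset_ball htR)
  rw [hμ.apply_ofFun_div hs hst htR hp, ← reCLM_apply,
    ← ContinuousLinearMap.circleAverage_comp_comm _ hint]
  refine circleAverage_nonneg_of_nonneg fun η hη => ?_
  rw [abs_of_pos ht] at hη
  rw [Function.comp_apply, reCLM_apply, re_ofReal_mul]
  have hw := hμ _ (inv_mem_ball_inv hs hst hη)
  exact mul_nonneg (by linarith) (hpos η hη)

theorem re_apply_ofFun_div_pos (hμ : IsHerglotz μ) (hs : 0 < s) (hsR : s < R)
    (hp : DifferentiableOn ℂ p (ball 0 R)) (hpos : ∀ z ∈ ball 0 R, 0 < (p z).re) :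
    0 < (μ (ofFun s p) / μ 1).re := by
  obtain ⟨t, hst, htR⟩ := exists_between hsR
  have hsph : sphere (0 : ℂ) t ⊆ ball 0 R := sphere_subset_ball htR
  obtain ⟨z₀, hz₀, hmin⟩ := (isCompact_sphere (0 : ℂ) t).exists_isMinOn
    (NormedSpace.sphere_nonempty.2 (hs.trans hst).le)
    (continuous_re.comp_continuousOn (hp.continuousOn.mono hsph))
  have hnonneg := hμ.re_apply_ofFun_div_nonneg hs hst htR
    (p := fun z => 1 * p z - (p z₀).re) ((hp.const_mul 1).sub_const _)
    fun z hz => by simpa using hmin hz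
  rw [ofFun_const_mul_sub_const (hp.continuousOn.mono (closedBall_subset_ball hsR))] at hnonneg
  have hμ1 := hμ.apply_one_ne_zero hs
  simp only [one_smul, map_sub, map_smul, smul_eq_mul, sub_div, sub_re, mul_div_cancel_right₀ _ hμ1,
    ofReal_re, sub_nonneg] at hnonneg
  exact (hpos z₀ (hsph hz₀)).trans_le hnonneg

theorem apply_ofFun_ne_zero (hμ : IsHerglotz μ) (hs : 0 < s) (hsR : s < R) {c : ℂ}
    (hp : DifferentiableOn ℂ p (ball 0 R)) (hpos : ∀ z ∈ ball 0 R, 0 < (c * p z).re) :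
    μ (ofFun s p) ≠ 0 := fun h => by
  have hre := hμ.re_apply_ofFun_div_pos hs hsR (p := fun z => c * p z - 0)
    ((hp.const_mul c).sub_const 0) (by simpa using hpos)
  rw [ofFun_const_mul_sub_const (hp.continuousOn.mono (closedBall_subset_ball hsR))] at hre
  simp [h] at hre

theorem apply_ofFun_div_mem_of_convex (hμ : IsHerglotz μ) (hs : 0 < s) (hsR : s < R) {Ω : Set ℂ}
    (hΩ : IsOpen Ω) (hconv : Convex ℝ Ω) (hp : DifferentiableOn ℂ p (ball 0 R))
    (hmaps : MapsTo p (ball 0 R) Ω) : μ (ofFun s p) / μ 1 ∈ Ω := by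
  by_contra hnot
  obtain ⟨ℓ, hℓ⟩ := RCLike.geometric_hahn_banach_open_point (𝕜 := ℂ) hconv hΩ hnot
  have hℓ_apply : ∀ a, ℓ a = ℓ 1 * a := fun a => by
    simpa [mul_comm] using ℓ.map_smul a 1
  have hpos := hμ.re_apply_ofFun_div_pos hs hsR
    (p := fun z => -ℓ 1 * p z - -(ℓ 1 * (μ (ofFun s p) / μ 1))) ((hp.const_mul _).sub_const _)
    fun z hz => by
      have hlt := hℓ _ (hmaps hz)
      simp only [hℓ_apply (p z), hℓ_apply (μ (ofFun s p) / μ 1), RCLike.re_eq_complex_re] at hlt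
      simpa [neg_add_eq_sub] using hlt
  rw [ofFun_const_mul_sub_const (hp.continuousOn.mono (closedBall_subset_ball hsR))] at hpos
  have hμ1 := hμ.apply_one_ne_zero hs
  simp only [map_sub, map_smul, smul_eq_mul, sub_div, mul_div_cancel_right₀ _ hμ1, neg_mul,
    neg_div, mul_div_assoc, sub_self, zero_re, lt_irrefl] at hpos

theorem apply_one_add_mul_ofFun_ne_zero (hμ : IsHerglotz μ) (hs : 0 < s) (hsR : s < R) {V : ℂ → ℂ}
    (hV : IsStarlikeFactor (1 / 2) R V) {x : ℂ} (hx : x ∈ ball 0 s⁻¹) :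
    μ ((1 + x • coord s) * ofFun s V) ≠ 0 := by
  obtain ⟨q, hq, hqs⟩ := exists_between
    (max_lt (mem_ball_zero_iff.1 hx) ((inv_lt_inv₀ (hs.trans hsR) hs).2 hsR))
  obtain ⟨hxq, hRq⟩ := max_lt_iff.1 hq
  have hR : 0 < R := hs.trans hsR
  have hq0 : 0 < q := (inv_pos.2 hR).trans hRq
  have htR : q⁻¹ < R := inv_lt_of_inv_lt₀ hR hRq
  obtain ⟨c, hc⟩ := hV.exists_re_mul_one_add_mul_pos htR (x := x) (by rwa [inv_inv])
  have hd : DifferentiableOn ℂ (fun z => (1 + x * z) * V z) (ball 0 R) :=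
    DifferentiableOn.mul (by fun_prop) hV.differentiableOn
  have hsub : closedBall (0 : ℂ) s ⊆ ball 0 R := closedBall_subset_ball hsR
  have hprod : (1 + x • coord s) * ofFun s V = ofFun s fun z => (1 + x * z) * V z := by
    ext ζ
    rw [ofFun_apply (hd.continuousOn.mono hsub)]
    simp [ofFun_apply (hV.differentiableOn.continuousOn.mono hsub)]
  rw [hprod]
  exact hμ.apply_ofFun_ne_zero (R := q⁻¹) hs ((lt_inv_comm₀ hs hq0).2 hqs)
    (hd.mono (ball_subset_ball htR.le)) hc

end IsHerglotz

end CDisc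

/-! ### The Ruscheweyh–Sheil-Small theorem for functionals -/

section EqualNorms

variable {y w : ℂ}

theorem conj_mul_eq_conj_mul_of_norm_eq (hyw : ‖y‖ = ‖w‖) : conj y * y = conj w * w := by
  rw [conj_mul', conj_mul', hyw]

theorem re_div_sub_of_norm_eq (hyw : ‖y‖ = ‖w‖) (hne : y ≠ w) : (y / (y - w)).re = 1 / 2 := by
  have hconj := conj_mul_eq_conj_mul_of_norm_eq hyw
  have hsub : y - w ≠ 0 := sub_ne_zero.2 hne
  have hsub' : conj y - conj w ≠ 0 := by rw [← map_sub]; exact (map_ne_zero _).2 hsub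
  have hsum : y / (y - w) + conj (y / (y - w)) = 1 := by
    rw [map_div₀, map_sub]
    field_simp
    linear_combination hconj
  rw [add_conj] at hsum
  have htwo : 2 * (y / (y - w)).re = 1 := by exact_mod_cast hsum
  linarith

theorem mul_div_sub_sq_of_norm_eq (hyw : ‖y‖ = ‖w‖) (hne : y ≠ w) :
    w * y / (y - w) ^ 2 = -((‖w‖ ^ 2 / ‖y - w‖ ^ 2 : ℝ) : ℂ) := by
  have hconj := conj_mul_eq_conj_mul_of_norm_eq hyw
  have hsub : y - w ≠ 0 := sub_ne_zero.2 hne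
  have hsub' : conj y - conj w ≠ 0 := by rw [← map_sub]; exact (map_ne_zero _).2 hsub
  push_cast
  rw [← conj_mul', ← conj_mul', map_sub]
  field_simp
  linear_combination w * hconj

theorem ne_zero_of_norm_eq (hyw : ‖y‖ = ‖w‖) (hne : y ≠ w) : y ≠ 0 := by
  rintro rfl
  exact hne (norm_eq_zero.1 (hyw.symm.trans norm_zero)).symm

end EqualNorms

namespace CDisc

variable {s : ℝ} {x y w : ℂ} (μ : CDisc s →L[ℂ] ℂ)

/-- The functional `u ↦ μ (W u)`. -/
def mulFunctional (W : CDisc s) : CDisc s →L[ℂ] ℂ :=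
  μ.comp (ContinuousLinearMap.mul ℂ (CDisc s) W)

@[simp]
theorem mulFunctional_apply (W u : CDisc s) : mulFunctional μ W u = μ (W * u) := rfl

theorem apply_geom_sq_mul_geom_div (hy : y ∈ ball 0 s⁻¹) (hw : w ∈ ball 0 s⁻¹)
    (hyw : ‖y‖ = ‖w‖) (hne : y ≠ w) (hμy : μ (geom s y ^ 2) ≠ 0) :
    μ (geom s y ^ 2 * geom s w) / μ (geom s y ^ 2) = y / (y - w) +
      (‖w‖ ^ 2 / ‖y - w‖ ^ 2 : ℝ) *
        ((y * μ (geom s y) - w * μ (geom s w)) / (y * μ (geom s y ^ 2))) := by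
  have hy0 : y ≠ 0 := ne_zero_of_norm_eq hyw hne
  have hsub : y - w ≠ 0 := sub_ne_zero.2 hne
  have hresolvent := geom_mul_geom hy hw
  have hresolvent_sq : (y - w) • (geom s y ^ 2 * geom s w) =
      y • geom s y ^ 2 - w • (geom s y * geom s w) := by
    have hmul := congrArg (geom s y * ·) hresolvent
    simp only [Algebra.smul_def] at *
    linear_combination hmul
  have hμ₁ := congrArg μ hresolvent
  have hμ₂ := congrArg μ hresolvent_sq
  simp only [map_sub, map_smul, smul_eq_mul] at hμ₁ hμ₂
  rw [← neg_neg ((‖w‖ ^ 2 / ‖y - w‖ ^ 2 : ℝ) : ℂ), ← mul_div_sub_sq_of_norm_eq hyw hne]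
  field_simp
  linear_combination (y - w) * hμ₂ - w * hμ₁

variable {μ}

theorem isHerglotz_mulFunctional_geom_sq
    (hμ : IsStarlikeFactor 0 s⁻¹ fun y => μ (geom s y ^ 2)) (hy : y ∈ ball 0 s⁻¹) :
    IsHerglotz (mulFunctional μ (geom s y ^ 2)) := by
  intro w hw
  simp only [mulFunctional_apply, mul_one]
  refine le_re_of_forall_norm_eq
    (K := fun y w => μ (geom s y ^ 2 * geom s w) / μ (geom s y ^ 2)) (fun w _ => ?_) (fun y _ => ?_)
    (fun y hy w hw hyw hne => ?_) hy hw
  · have hd := μ.differentiable.comp_differentiableOn ((differentiableOn_geom (s := s)).pow 2)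
    exact (μ.differentiable.comp_differentiableOn
      ((differentiableOn_geom.pow 2).mul_const _)).fun_div hd hμ.ne_zero
  · exact (μ.differentiable.comp_differentiableOn
      (differentiableOn_geom.const_mul _)).div_const _
  · have hnonneg := hμ.re_primitive_sub_div_nonneg (fun z hz => hasDerivAt_mul_apply_geom μ hz) hy
      (ne_zero_of_norm_eq hyw hne) hyw
    rw [apply_geom_sq_mul_geom_div μ hy hw hyw hne (hμ.ne_zero y hy), add_re,
      re_div_sub_of_norm_eq hyw hne, re_ofReal_mul]
    exact le_add_of_nonneg_right (mul_nonneg (by positivity) hnonneg)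

theorem isHerglotz_mulFunctional_geom
    (hμ : IsStarlikeFactor (1 / 2) s⁻¹ fun y => μ (geom s y)) (hy : y ∈ ball 0 s⁻¹) :
    IsHerglotz (mulFunctional μ (geom s y)) := by
  intro w hw
  simp only [mulFunctional_apply, mul_one]
  refine le_re_of_forall_norm_eq
    (K := fun y w => μ (geom s y * geom s w) / μ (geom s y)) (fun w _ => ?_) (fun y _ => ?_)
    (fun y hy w hw hyw hne => ?_) hy hw
  · exact (μ.differentiable.comp_differentiableOn
      (differentiableOn_geom.mul_const _)).fun_div (differentiableOn_comp_geom μ) hμ.ne_zero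
  · exact (μ.differentiable.comp_differentiableOn
      (differentiableOn_geom.const_mul _)).div_const _
  · have hw0 : w ≠ 0 := ne_zero_of_norm_eq hyw.symm hne.symm
    have hnonneg := hμ.re_div_mul_one_sub_div_nonneg hw hw0 hyw
    have hμy := hμ.ne_zero y hy
    have : μ (geom s w) ≠ 0 := hμ.ne_zero w hw
    have hsub : y - w ≠ 0 := sub_ne_zero.2 hne
    have hratio : μ (geom s y * geom s w) / μ (geom s y) =
        y / (y - w) + (μ (geom s y) / μ (geom s w) * (1 - y / w))⁻¹ := by
      have hresolvent := congrArg μ (geom_mul_geom hy hw)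
      simp only [map_sub, map_smul, smul_eq_mul] at hresolvent
      rw [one_sub_div hw0, ← neg_sub y w]
      field_simp
      linear_combination hresolvent
    rw [hratio, add_re, re_div_sub_of_norm_eq hyw hne, inv_re]
    exact le_add_of_nonneg_right (div_nonneg hnonneg (normSq_nonneg _))

theorem isStarlikeFactor_of_apply_geom_sq_ne_zero
    (hμ : ∀ x ∈ ball (0 : ℂ) s⁻¹, ∀ y ∈ ball (0 : ℂ) s⁻¹,
      μ (geom s y ^ 2 * (1 + x • coord s)) ≠ 0) :
    IsStarlikeFactor (1 / 2) s⁻¹ fun y => μ (geom s y) := by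
  have hexpand : ∀ x ∈ ball (0 : ℂ) s⁻¹, ∀ y ∈ ball (0 : ℂ) s⁻¹,
      μ (geom s y) + (y + x) * μ (coord s * geom s y ^ 2) ≠ 0 := fun x hx y hy => by
    simpa [geom_sq_mul_one_add hy] using hμ x hx y hy
  have hne : ∀ y ∈ ball 0 s⁻¹, μ (geom s y) ≠ 0 := fun y hy => by
    simpa using hexpand (-y) (by simpa using hy) y hy
  refine ⟨differentiableOn_comp_geom μ, hne, fun y hy => ?_⟩
  rw [logDeriv_apply, (hasDerivAt_apply_geom μ hy).deriv]
  by_contra hcon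
  set τ := y * (μ (coord s * geom s y ^ 2) / μ (geom s y)) with hτ_def
  have hτre : τ.re ≤ -(1 / 2) := by linarith
  have hτ0 : τ ≠ 0 := fun h => by norm_num [h] at hτre
  have hle : ‖1 + τ‖ ≤ ‖τ‖ := by
    rw [← sq_le_sq₀ (norm_nonneg _) (norm_nonneg _), Complex.sq_norm, Complex.sq_norm, normSq_apply,
      normSq_apply]
    simp only [add_re, one_re, add_im, one_im, zero_add]
    nlinarith
  have hx : -(1 + τ) / τ * y ∈ ball 0 s⁻¹ := by
    rw [mem_ball_zero_iff, norm_mul, norm_div, norm_neg]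
    exact (mul_le_of_le_one_left (norm_nonneg y)
      (div_le_one_of_le₀ hle (norm_nonneg τ))).trans_lt (mem_ball_zero_iff.1 hy)
  refine hexpand _ hx y hy ?_
  have hτmul : y * μ (coord s * geom s y ^ 2) = τ * μ (geom s y) := by
    rw [hτ_def, mul_assoc, div_mul_cancel₀ _ (hne y hy)]
  field_simp
  linear_combination -hτmul

theorem isHerglotz_of_apply_geom_ne_zero
    (hμ : ∀ x ∈ ball (0 : ℂ) s⁻¹, ∀ y ∈ ball (0 : ℂ) s⁻¹, μ (geom s y * (1 + x • coord s)) ≠ 0) :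
    IsHerglotz μ := by
  intro y hy
  have hμ1 : μ 1 ≠ 0 := by
    have h0 : (0 : ℂ) ∈ ball 0 s⁻¹ := mem_ball_self (pos_of_mem_ball hy)
    simpa using hμ 0 h0 0 h0
  by_contra hcon
  set K := μ (geom s y) / μ 1 with hK_def
  have hKre : K.re < 1 / 2 := not_le.1 hcon
  have hlt : ‖K‖ < ‖1 - K‖ := by
    rw [← sq_lt_sq₀ (norm_nonneg _) (norm_nonneg _), Complex.sq_norm, Complex.sq_norm, normSq_apply,
      normSq_apply]
    simp only [sub_re, one_re, sub_im, one_im]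
    nlinarith [hKre]
  have hK1 : 1 - K ≠ 0 := norm_pos_iff.1 ((norm_nonneg K).trans_lt hlt)
  have hx : K / (1 - K) * y ∈ ball 0 s⁻¹ := by
    rw [mem_ball_zero_iff, norm_mul, norm_div]
    exact (mul_le_of_le_one_left (norm_nonneg y)
      (div_le_one_of_le₀ hlt.le (norm_nonneg _))).trans_lt (mem_ball_zero_iff.1 hy)
  refine hμ _ hx y hy ?_
  have hKmul : μ (geom s y) = K * μ 1 := by rw [hK_def, div_mul_cancel₀ _ hμ1]
  rw [geom_mul_one_add hy, map_add, map_smul, map_sub, hKmul, smul_eq_mul]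
  field_simp
  ring

theorem isHerglotz_mulFunctional_ofFun_sq {R : ℝ} (hs : 0 < s) (hsR : s < R)
    (hμ : IsStarlikeFactor 0 s⁻¹ fun y => μ (geom s y ^ 2)) {V : ℂ → ℂ}
    (hV : IsStarlikeFactor (1 / 2) R V) : IsHerglotz (mulFunctional μ (ofFun s V ^ 2)) := by
  set v := ofFun s V
  have hfactor : IsStarlikeFactor (1 / 2) s⁻¹ fun y => mulFunctional μ v (geom s y) :=
    isStarlikeFactor_of_apply_geom_sq_ne_zero fun x hx y hy => by
      have hne := (isHerglotz_mulFunctional_geom_sq hμ hy).apply_one_add_mul_ofFun_ne_zero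
        hs hsR hV hx
      rwa [mulFunctional_apply, mul_comm _ v, mul_left_comm] at hne
  refine isHerglotz_of_apply_geom_ne_zero fun x hx y hy => ?_
  have hne := (isHerglotz_mulFunctional_geom hfactor hy).apply_one_add_mul_ofFun_ne_zero
    hs hsR hV hx
  rwa [mulFunctional_apply, mulFunctional_apply, mul_comm _ v, mul_left_comm (geom s y),
    ← mul_assoc v v, ← sq] at hne

end CDisc

/-! ### Power series and the functionals they induce -/

/-- The power series `∑ a n * z ^ n` converges to `f z` on the open disk of radius `R` about `0`. -/
def HasDiscExpansion (a : ℕ → ℂ) (f : ℂ → ℂ) (R : ℝ) : Prop :=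
  ∀ z ∈ ball (0 : ℂ) R, HasSum (fun n => a n * z ^ n) (f z)

namespace HasDiscExpansion

variable {a b : ℕ → ℂ} {f g : ℂ → ℂ} {r R : ℝ}

theorem summable_norm_mul_pow (hf : HasDiscExpansion a f R) (hr : 0 ≤ r) (hrR : r < R) :
    Summable fun n => ‖a n‖ * r ^ n := by
  have hmem : (r : ℂ) ∈ ball 0 R := by
    rwa [mem_ball_zero_iff, norm_real, Real.norm_of_nonneg hr]
  simpa [abs_of_nonneg hr] using (hf r hmem).summable.norm

theorem comp_const_mul (hf : HasDiscExpansion a f R) {c : ℂ}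
    (hc : ∀ z ∈ ball (0 : ℂ) r, c * z ∈ ball (0 : ℂ) R) :
    HasDiscExpansion (fun n => a n * c ^ n) (fun z => f (c * z)) r := fun z hz => by
  simpa only [mul_pow, mul_assoc] using hf (c * z) (hc z hz)

theorem differentiableAt_and_hasSum_deriv (hf : HasDiscExpansion a f R) {z : ℂ}
    (hz : z ∈ ball 0 R) :
    DifferentiableAt ℂ f z ∧ HasSum (fun n : ℕ => (n + 1) * a (n + 1) * z ^ n) (deriv f z) := by
  obtain ⟨r, hzr, hrR⟩ := exists_between (mem_ball_zero_iff.1 hz)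
  have hzr' : z ∈ ball 0 r := mem_ball_zero_iff.2 hzr
  have hsum := hf.summable_norm_mul_pow ((norm_nonneg z).trans hzr.le) hrR
  have hterm (n : ℕ) : DifferentiableOn ℂ (fun w : ℂ => a n * w ^ n) (ball 0 r) := by fun_prop
  have hbound (n : ℕ) (w : ℂ) (hw : w ∈ ball 0 r) : ‖a n * w ^ n‖ ≤ ‖a n‖ * r ^ n := by
    rw [norm_mul, norm_pow]
    gcongr
    exact (mem_ball_zero_iff.1 hw).le
  have heq : (fun w => ∑' n, a n * w ^ n) =ᶠ[nhds z] f := by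
    filter_upwards [isOpen_ball.mem_nhds hzr'] with w hw
    exact (hf w (ball_subset_ball hrR.le hw)).tsum_eq
  constructor
  · exact ((differentiableOn_tsum_of_summable_norm hsum hterm isOpen_ball hbound).differentiableAt
      (isOpen_ball.mem_nhds hzr')).congr_of_eventuallyEq heq.symm
  · have hderiv := hasSum_deriv_of_summable_norm hsum hterm isOpen_ball hbound hzr'
    rw [heq.deriv_eq, ← hasSum_nat_add_iff' 1] at hderiv
    simpa [mul_comm, mul_left_comm, mul_assoc] using hderiv

theorem differentiableOn (hf : HasDiscExpansion a f R) : DifferentiableOn ℂ f (ball 0 R) :=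
  fun _ hz => (hf.differentiableAt_and_hasSum_deriv hz).1.differentiableWithinAt

protected theorem deriv (hf : HasDiscExpansion a f R) :
    HasDiscExpansion (fun n => (n + 1) * a (n + 1)) (deriv f) R :=
  fun _ hz => (hf.differentiableAt_and_hasSum_deriv hz).2

theorem apply_zero (hf : HasDiscExpansion a f R) (hR : 0 < R) : f 0 = a 0 := by
  have hsingle := hasSum_single (f := fun n => a n * (0 : ℂ) ^ n) 0
    fun n hn => by rw [zero_pow hn, mul_zero]
  simpa using (hf 0 (mem_ball_self hR)).unique hsingle

theorem deriv_zero (hf : HasDiscExpansion a f R) (hR : 0 < R) : deriv f 0 = a 1 := by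
  simpa using hf.deriv.apply_zero hR

protected theorem dslope (hf : HasDiscExpansion a f R) :
    HasDiscExpansion (fun n => a (n + 1)) (dslope f 0) R := by
  intro z hz
  have hR : 0 < R := pos_of_mem_ball hz
  rcases eq_or_ne z 0 with rfl | hz0
  · rw [dslope_same, hf.deriv_zero hR]
    simpa using hasSum_single (f := fun n => a (n + 1) * (0 : ℂ) ^ n) 0
      fun n hn => by rw [zero_pow hn, mul_zero]
  · have hshift := (hasSum_nat_add_iff' 1).2 (hf z hz)
    simp only [Finset.range_one, Finset.sum_singleton, pow_zero, mul_one,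
      ← hf.apply_zero hR] at hshift
    rw [dslope_of_ne _ hz0, slope_def_field, sub_zero]
    refine (hasSum_mul_left_iff hz0).1 ?_
    rw [mul_div_cancel₀ _ hz0]
    simpa only [pow_succ', mul_left_comm] using hshift

theorem unique (hf : HasDiscExpansion a f R) (hg : HasDiscExpansion b f R) (hR : 0 < R) :
    a = b := by
  have hseries {c : ℕ → ℂ} (hc : HasDiscExpansion c f R) :
      HasFPowerSeriesAt f (FormalMultilinearSeries.ofScalars ℂ c) 0 := by
    rw [hasFPowerSeriesAt_iff]
    filter_upwards [ball_mem_nhds (0 : ℂ) hR] with z hz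
    simpa [FormalMultilinearSeries.coeff_ofScalars, mul_comm] using hc z hz
  funext n
  simpa [FormalMultilinearSeries.coeff_ofScalars] using
    congrArg (fun p => p.coeff n) ((hseries hf).eq_formalMultilinearSeries (hseries hg))

end HasDiscExpansion

theorem norm_circleAverage_le {f : ℂ → ℂ} {R C : ℝ}
    (hf : ∀ η ∈ sphere (0 : ℂ) |R|, ‖f η‖ ≤ C) :
    ‖circleAverage f 0 R‖ ≤ C := by
  have hint := intervalIntegral.norm_integral_le_of_norm_le_const (a := 0) (b := 2 * Real.pi)
    fun θ _ => hf _ (circleMap_mem_sphere' 0 R θ)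
  rw [sub_zero, abs_of_pos Real.two_pi_pos] at hint
  rw [Real.circleAverage_def, norm_smul, norm_inv, Real.norm_of_nonneg Real.two_pi_pos.le,
    inv_mul_le_iff₀ Real.two_pi_pos]
  exact hint.trans_eq (mul_comm _ _)

namespace CDisc

variable {s R : ℝ} {Ψ : ℂ → ℂ} {d : ℕ → ℂ}

open Classical in
/-- The extension by `0` to the plane of a function on the closed disk. -/
def extend (v : CDisc s) (ζ : ℂ) : ℂ := if hζ : ζ ∈ closedBall 0 s then v ⟨ζ, hζ⟩ else 0

theorem extend_of_mem {ζ : ℂ} (hζ : ζ ∈ closedBall 0 s) (v : CDisc s) :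
    v.extend ζ = v ⟨ζ, hζ⟩ := dif_pos hζ

theorem extend_add (v w : CDisc s) (ζ : ℂ) : (v + w).extend ζ = v.extend ζ + w.extend ζ := by
  unfold extend
  split_ifs <;> simp

theorem extend_smul (c : ℂ) (v : CDisc s) (ζ : ℂ) : (c • v).extend ζ = c * v.extend ζ := by
  unfold extend
  split_ifs <;> simp

theorem norm_extend_le (v : CDisc s) (ζ : ℂ) : ‖v.extend ζ‖ ≤ ‖v‖ := by
  unfold extend
  split_ifs with hζ
  · exact v.norm_coe_le_norm _
  · simp

theorem continuousOn_extend (v : CDisc s) : ContinuousOn v.extend (closedBall 0 s) := by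
  rw [continuousOn_iff_continuous_domRestrict]
  exact v.continuous.congr fun ζ => (extend_of_mem ζ.2 v).symm

theorem inv_mem_closedBall {η : ℂ} (hη : η ∈ sphere (0 : ℂ) s⁻¹) : η⁻¹ ∈ closedBall (0 : ℂ) s := by
  rw [mem_closedBall_zero_iff, norm_inv, mem_sphere_zero_iff_norm.1 hη, inv_inv]

theorem circleIntegrable_extend_inv_mul (hs : 0 < s) (hΨ : ContinuousOn Ψ (sphere 0 s⁻¹))
    (v : CDisc s) : CircleIntegrable (fun η => v.extend η⁻¹ * Ψ η) 0 s⁻¹ :=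
  ContinuousOn.circleIntegrable (inv_pos.2 hs).le <| .mul
    (v.continuousOn_extend.comp
      (continuousOn_inv₀.mono fun _ hη => ne_of_mem_sphere hη (inv_pos.2 hs).ne')
      fun _ => inv_mem_closedBall) hΨ

theorem exists_forall_apply_eq_circleAverage (hs : 0 < s) (hΨ : ContinuousOn Ψ (sphere 0 s⁻¹)) :
    ∃ μ : CDisc s →L[ℂ] ℂ, ∀ v, μ v = circleAverage (fun η => v.extend η⁻¹ * Ψ η) 0 s⁻¹ := by
  obtain ⟨M, hM⟩ := (isCompact_sphere (0 : ℂ) s⁻¹).exists_bound_of_continuousOn hΨ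
  have hint := circleIntegrable_extend_inv_mul hs hΨ
  let L : CDisc s →ₗ[ℂ] ℂ :=
    { toFun := fun v => circleAverage (fun η => v.extend η⁻¹ * Ψ η) 0 s⁻¹
      map_add' := fun v w => by
        simp only [extend_add, add_mul]
        exact circleAverage_fun_add (hint v) (hint w)
      map_smul' := fun c v => by
        simp only [extend_smul, mul_assoc]
        exact Real.circleAverage_fun_smul (a := c) }
  refine ⟨L.mkContinuous M fun v => ?_, fun v => rfl⟩
  refine norm_circleAverage_le fun η hη => ?_
  rw [abs_of_pos (inv_pos.2 hs)] at hη
  rw [norm_mul, mul_comm]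
  exact mul_le_mul (hM η hη) (v.norm_extend_le _) (norm_nonneg _)
    ((norm_nonneg _).trans (hM η hη))

theorem exists_forall_apply_geom_eq (hs : 0 < s) (hsR : s⁻¹ < R)
    (hΨ : DifferentiableOn ℂ Ψ (ball 0 R)) :
    ∃ μ : CDisc s →L[ℂ] ℂ, ∀ y ∈ ball 0 s⁻¹, μ (geom s y) = Ψ y := by
  have hs' : |s⁻¹| = s⁻¹ := abs_of_pos (inv_pos.2 hs)
  obtain ⟨μ, hμ⟩ := exists_forall_apply_eq_circleAverage hs
    (hΨ.continuousOn.mono (sphere_subset_ball hsR))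
  refine ⟨μ, fun y hy => ?_⟩
  rw [hμ, ← DiffContOnCl.circleAverage_smul_div (f := Ψ) (c := 0) (R := s⁻¹) (w := y)]
  · refine circleAverage_congr_sphere fun η hη => ?_
    rw [hs'] at hη
    have hη0 : η ≠ 0 := ne_of_mem_sphere hη (inv_pos.2 hs).ne'
    simp only [extend_of_mem (inv_mem_closedBall hη), geom_apply hy, sub_zero, smul_eq_mul]
    rw [← inv_div, sub_div, div_self hη0, div_eq_mul_inv]
  · rw [hs']
    exact hΨ.diffContOnCl_ball (closedBall_subset_ball hsR)
  · rwa [hs']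

theorem hasDiscExpansion_apply_geom (μ : CDisc s →L[ℂ] ℂ) :
    HasDiscExpansion (fun n => μ (coord s ^ n)) (fun y => μ (geom s y)) s⁻¹ := fun y hy => by
  simpa [smul_pow, mul_comm] using (hasSum_geom hy).mapL μ

theorem hasDiscExpansion_apply_geom_sq (μ : CDisc s →L[ℂ] ℂ) :
    HasDiscExpansion (fun n => (n + 1) * μ (coord s ^ n)) (fun y => μ (geom s y ^ 2)) s⁻¹ := by
  intro y hy
  have hsum :=
    (hasSum_choose_mul_geometric_of_norm_lt_one' 1 (norm_smul_coord_lt_one hy)).mapL μ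
  refine hsum.congr_fun fun n => ?_
  simp only [Nat.choose_one_right, ← nsmul_eq_mul, map_nsmul, smul_pow,
    map_smul, smul_eq_mul]
  simp only [nsmul_eq_mul, Nat.cast_add, Nat.cast_one]
  ring

theorem exists_forall_apply_coord_pow_eq (hs : 0 < s) (hsR : s⁻¹ < R)
    (hΨ : HasDiscExpansion d Ψ R) : ∃ μ : CDisc s →L[ℂ] ℂ, ∀ n, μ (coord s ^ n) = d n := by
  obtain ⟨μ, hμ⟩ := exists_forall_apply_geom_eq hs hsR hΨ.differentiableOn
  refine ⟨μ, congrFun <| (hasDiscExpansion_apply_geom μ).unique (f := fun y => μ (geom s y))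
    (fun y hy => ?_) (inv_pos.2 hs)⟩
  simp only [hμ y hy]
  exact hΨ y (ball_subset_ball hsR.le hy)

theorem hasSum_ofFun (hs : 0 < s) (hsR : s < R) (hΨ : HasDiscExpansion d Ψ R) :
    HasSum (fun n => d n • coord s ^ n) (ofFun s Ψ) := by
  have hcoord (n : ℕ) : ‖coord s ^ n‖ ≤ s ^ n :=
    (ContinuousMap.norm_le _ (by positivity)).2 fun ζ => by
      rw [ContinuousMap.pow_apply, norm_pow]
      exact pow_le_pow_left₀ (norm_nonneg _) (mem_closedBall_zero_iff.1 ζ.2) n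
  have hsum : Summable fun n => d n • coord s ^ n :=
    .of_norm_bounded (hΨ.summable_norm_mul_pow hs.le hsR) fun n => by
      rw [norm_smul]
      exact mul_le_mul_of_nonneg_left (hcoord n) (norm_nonneg _)
  convert hsum.hasSum
  ext ζ
  rw [ofFun_apply (hΨ.differentiableOn.continuousOn.mono (closedBall_subset_ball hsR))]
  have heval := hsum.hasSum.mapL (ContinuousMap.evalCLM ℂ ζ)
  exact (hΨ ζ (closedBall_subset_ball hsR ζ.2)).unique (by simpa using heval)

end CDisc

theorem mul_mem_ball_one {s : ℝ} {y z : ℂ} (hz : z ∈ ball 0 s) (hy : y ∈ ball 0 s⁻¹) :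
    z * y ∈ ball (0 : ℂ) 1 := by
  have hs : 0 < s := pos_of_mem_ball hz
  rw [mem_ball_zero_iff] at *
  calc ‖z * y‖ = ‖z‖ * ‖y‖ := norm_mul z y
    _ ≤ s * ‖y‖ := by gcongr
    _ < s * s⁻¹ := by gcongr
    _ = 1 := mul_inv_cancel₀ hs.ne'

namespace HasDiscExpansion

variable {a b c : ℕ → ℂ} {f G H P : ℂ → ℂ} {R s : ℝ} {z : ℂ}

theorem summable_div_succ (ha : HasDiscExpansion a f R) (hz : z ∈ ball 0 R) :
    Summable fun n : ℕ => a n / (n + 1) * z ^ n := by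
  refine .of_norm_bounded (ha z hz).summable.norm fun n => ?_
  have hn : 1 ≤ ‖(n : ℂ) + 1‖ := by
    norm_cast
    exact Nat.le_add_left 1 n
  rw [div_mul_eq_mul_div, norm_div]
  exact div_le_self (norm_nonneg _) hn

theorem div_succ (ha : HasDiscExpansion a f R) :
    HasDiscExpansion (fun n => a n / (n + 1)) (fun z => ∑' n : ℕ, a n / (n + 1) * z ^ n) R :=
  fun _ hz => (ha.summable_div_succ hz).hasSum

theorem exists_hadamardFunctional (hH : HasDiscExpansion a H 1) (hz : z ∈ ball 0 s) :
    ∃ μ : CDisc s →L[ℂ] ℂ, (∀ n : ℕ, μ (CDisc.coord s ^ n) = a n / (n + 1) * z ^ n) ∧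
      ∀ y ∈ ball 0 s⁻¹, μ (CDisc.geom s y ^ 2) = H (z * y) := by
  obtain ⟨t, hzt, hts⟩ := exists_between (mem_ball_zero_iff.1 hz)
  have ht : 0 < t := (norm_nonneg z).trans_lt hzt
  have hst : s⁻¹ < t⁻¹ := by gcongr
  obtain ⟨μ, hμ⟩ := CDisc.exists_forall_apply_coord_pow_eq (ht.trans hts) hst
    (hH.div_succ.comp_const_mul fun _ => mul_mem_ball_one (mem_ball_zero_iff.2 hzt))
  refine ⟨μ, hμ, fun y hy => (CDisc.hasDiscExpansion_apply_geom_sq μ y hy).unique ?_⟩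
  convert hH (z * y) (mul_mem_ball_one hz hy) using 2 with n
  simp only [hμ n]
  have hn : (n : ℂ) + 1 ≠ 0 := n.cast_add_one_ne_zero
  rw [mul_pow]
  field_simp

theorem hadamard_apply_mem (ha : HasDiscExpansion a H 1) (hb : HasDiscExpansion b G 1)
    (hc : HasDiscExpansion c (fun z => G z * P z) 1) (hH : IsStarlikeFactor 0 1 H)
    (hG : IsStarlikeFactor 0 1 G) (hP : DifferentiableOn ℂ P (ball 0 1)) {Ω : Set ℂ}
    (hΩ : IsOpen Ω) (hconv : Convex ℝ Ω) (hmaps : MapsTo P (ball 0 1) Ω) (hz : z ∈ ball 0 1) :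
    ∃ K K', HasSum (fun n : ℕ => a n / (n + 1) * b n * z ^ n) K ∧
      HasSum (fun n : ℕ => a n / (n + 1) * c n * z ^ n) K' ∧ K ≠ 0 ∧ K' / K ∈ Ω := by
  obtain ⟨s, hzs, hs1⟩ := exists_between (mem_ball_zero_iff.1 hz)
  have hs : 0 < s := (norm_nonneg z).trans_lt hzs
  obtain ⟨μ, hcoord, hgeom⟩ := ha.exists_hadamardFunctional (mem_ball_zero_iff.2 hzs)
  have hsum {d : ℕ → ℂ} {f : ℂ → ℂ} (hd : HasDiscExpansion d f 1) :
      HasSum (fun n : ℕ => a n / (n + 1) * d n * z ^ n) (μ (CDisc.ofFun s f)) := by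
    simpa [hcoord, mul_comm, mul_left_comm] using (CDisc.hasSum_ofFun hs hs1 hd).mapL μ
  obtain ⟨V, hV, hVG⟩ := hG.exists_sq_eq
  have hcont {f : ℂ → ℂ} (hf : DifferentiableOn ℂ f (ball 0 1)) :
      ContinuousOn f (closedBall 0 s) :=
    hf.continuousOn.mono (closedBall_subset_ball hs1)
  have hVG' : CDisc.ofFun s V ^ 2 = CDisc.ofFun s G := by
    rw [sq, ← CDisc.ofFun_mul (hcont hV.differentiableOn) (hcont hV.differentiableOn)]
    exact CDisc.ofFun_congr fun ζ hζ =>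
      (sq (V ζ)).symm.trans (hVG ζ (closedBall_subset_ball hs1 hζ))
  have hμ : IsStarlikeFactor 0 s⁻¹ fun y => μ (CDisc.geom s y ^ 2) :=
    (hH.comp_const_mul fun _ => mul_mem_ball_one (mem_ball_zero_iff.2 hzs)).congr hgeom
  have hHerglotz := CDisc.isHerglotz_mulFunctional_ofFun_sq hs hs1 hμ hV
  have hone := hHerglotz.apply_one_ne_zero hs
  have hmem := hHerglotz.apply_ofFun_div_mem_of_convex hs hs1 hΩ hconv hP hmaps
  rw [hVG', CDisc.mulFunctional_apply, mul_one] at hone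
  rw [hVG', CDisc.mulFunctional_apply, CDisc.mulFunctional_apply, mul_one,
    ← CDisc.ofFun_mul (hcont hG.differentiableOn) (hcont hP)] at hmem
  exact ⟨_, _, hsum hb, hsum hc, hone, hmem⟩

end HasDiscExpansion

/-! ### Univalent functions -/

section Univalent

variable {ψ : ℂ → ℂ} {U : Set ℂ} {z : ℂ}

theorem not_eventually_eq_const_of_injOn (hU : IsOpen U) (hinj : InjOn ψ U) (hz : z ∈ U) :
    ¬∀ᶠ w in nhds z, ψ w = ψ z := fun hconst => by
  obtain ⟨w, ⟨hwψ, hwU⟩, hwz⟩ := (((hconst.and (hU.mem_nhds hz)).filter_mono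
    nhdsWithin_le_nhds).and (self_mem_nhdsWithin (s := {z}ᶜ))).exists
  exact hwz (hinj hwU hz hwψ)

theorem nhds_le_map_nhds_of_injOn (hU : IsOpen U) (hψ : DifferentiableOn ℂ ψ U)
    (hinj : InjOn ψ U) (hz : z ∈ U) : nhds (ψ z) ≤ (nhds z).map ψ :=
  (hψ.analyticAt (hU.mem_nhds hz)).eventually_constant_or_nhds_le_map_nhds.resolve_left
    (not_eventually_eq_const_of_injOn hU hinj hz)

theorem isOpen_image_of_injOn (hU : IsOpen U) (hψ : DifferentiableOn ℂ ψ U)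
    (hinj : InjOn ψ U) : IsOpen (ψ '' U) := by
  rw [isOpen_iff_mem_nhds]
  rintro _ ⟨z, hz, rfl⟩
  exact nhds_le_map_nhds_of_injOn hU hψ hinj hz (Filter.image_mem_map (hU.mem_nhds hz))

theorem continuousAt_invFunOn (hU : IsOpen U) (hψ : DifferentiableOn ℂ ψ U)
    (hinj : InjOn ψ U) (hz : z ∈ U) : ContinuousAt (Function.invFunOn ψ U) (ψ z) := by
  have hid : Function.invFunOn ψ U ∘ ψ =ᶠ[nhds z] id := by
    filter_upwards [hU.mem_nhds hz] with w hw using hinj.leftInvOn_invFunOn hw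
  calc (nhds (ψ z)).map (Function.invFunOn ψ U)
      ≤ ((nhds z).map ψ).map (Function.invFunOn ψ U) :=
        Filter.map_mono (nhds_le_map_nhds_of_injOn hU hψ hinj hz)
    _ = nhds z := by rw [Filter.map_map, Filter.map_congr hid, Filter.map_id]
    _ = nhds (Function.invFunOn ψ U (ψ z)) := by rw [hinj.leftInvOn_invFunOn hz]

theorem eventually_deriv_ne_zero_of_injOn (hU : IsOpen U) (hψ : DifferentiableOn ℂ ψ U)
    (hinj : InjOn ψ U) (hz : z ∈ U) : ∀ᶠ w in nhdsWithin z {z}ᶜ, deriv ψ w ≠ 0 := by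
  have hψz : AnalyticAt ℂ ψ z := hψ.analyticAt (hU.mem_nhds hz)
  refine hψz.deriv.eventually_eq_zero_or_eventually_ne_zero.resolve_left fun hzero => ?_
  obtain ⟨ε, hε, hball⟩ := Metric.eventually_nhds_iff_ball.1 (hzero.and (hU.mem_nhds hz))
  refine not_eventually_eq_const_of_injOn hU hinj hz ?_
  filter_upwards [ball_mem_nhds z hε] with w hw
  exact isOpen_ball.is_const_of_deriv_eq_zero (convex_ball z ε).isPreconnected
    (hψ.mono fun w hw => (hball w hw).2) (fun w hw => (hball w hw).1) hw (mem_ball_self hε)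

theorem differentiableAt_invFunOn (hU : IsOpen U) (hψ : DifferentiableOn ℂ ψ U)
    (hinj : InjOn ψ U) (hz : z ∈ U) (hderiv : deriv ψ z ≠ 0) :
    DifferentiableAt ℂ (Function.invFunOn ψ U) (ψ z) := by
  have hψz : HasDerivAt ψ (deriv ψ z) (Function.invFunOn ψ U (ψ z)) := by
    rw [hinj.leftInvOn_invFunOn hz]
    exact (hψ.differentiableAt (hU.mem_nhds hz)).hasDerivAt
  refine (hψz.of_local_left_inverse (continuousAt_invFunOn hU hψ hinj hz) hderiv
    ?_).differentiableAt
  filter_upwards [(isOpen_image_of_injOn hU hψ hinj).mem_nhds (mem_image_of_mem ψ hz)]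
    with w hw using Function.invFunOn_eq hw

theorem differentiableOn_invFunOn (hU : IsOpen U) (hψ : DifferentiableOn ℂ ψ U)
    (hinj : InjOn ψ U) : DifferentiableOn ℂ (Function.invFunOn ψ U) (ψ '' U) := by
  have hopen := isOpen_image_of_injOn hU hψ hinj
  rintro _ ⟨z, hz, rfl⟩
  have hcont := continuousAt_invFunOn hU hψ hinj hz
  -- The zeros of `deriv ψ` are isolated, so they are removable singularities of the inverse.
  refine (analyticAt_of_differentiable_on_punctured_nhds_of_continuousAt ?_
    hcont).differentiableWithinAt
  have htendsto : Filter.Tendsto (Function.invFunOn ψ U) (nhdsWithin (ψ z) {ψ z}ᶜ)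
      (nhdsWithin z {z}ᶜ) := by
    rw [ContinuousAt, hinj.leftInvOn_invFunOn hz] at hcont
    refine tendsto_nhdsWithin_iff.2 ⟨hcont.mono_left nhdsWithin_le_nhds, ?_⟩
    filter_upwards [self_mem_nhdsWithin,
      mem_nhdsWithin_of_mem_nhds (hopen.mem_nhds (mem_image_of_mem ψ hz))] with w hwz hw hwinv
    exact hwz (by rw [← Function.invFunOn_eq hw, hwinv, mem_singleton_iff])
  filter_upwards [htendsto.eventually (eventually_deriv_ne_zero_of_injOn hU hψ hinj hz),
    mem_nhdsWithin_of_mem_nhds (hopen.mem_nhds (mem_image_of_mem ψ hz))] with w hderiv hw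
  rw [← Function.invFunOn_eq hw]
  exact differentiableAt_invFunOn hU hψ hinj (Function.invFunOn_mem hw) hderiv

end Univalent

/-! ### Convolutions of starlike functions -/

/-- The quotient `z f'(z) / f(z)` that controls starlikeness, written with the regular factor
`dslope f 0` of `f(z) = z · dslope f 0 z` so that it needs no separate value at `z = 0`. -/
def starlikeQuotient (f : ℂ → ℂ) (z : ℂ) : ℂ := deriv f z / dslope f 0 z

section StarlikeQuotient

variable {f ψ : ℂ → ℂ} {α : ℝ} {z : ℂ}

theorem isOpen_unitDisk : IsOpen 𝔻 := isOpen_ball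

theorem zero_mem_unitDisk : (0 : ℂ) ∈ 𝔻 := mem_ball_self one_pos

namespace IsClassA

theorem differentiableOn_dslope (hf : IsClassA f) : DifferentiableOn ℂ (dslope f 0) 𝔻 :=
  (Complex.differentiableOn_dslope (isOpen_unitDisk.mem_nhds zero_mem_unitDisk)).2 hf.1

theorem dslope_zero (hf : IsClassA f) : dslope f 0 0 = 1 := by rw [dslope_same, hf.2.2]

theorem mul_dslope (hf : IsClassA f) (z : ℂ) : z * dslope f 0 z = f z := by
  simpa [hf.2.1] using sub_smul_dslope f 0 z

theorem forall_dslope_ne_zero_iff (hf : IsClassA f) :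
    (∀ z ∈ 𝔻, dslope f 0 z ≠ 0) ↔ ∀ z ∈ 𝔻, z ≠ 0 → f z ≠ 0 := by
  refine forall₂_congr fun z _ => ?_
  rcases eq_or_ne z 0 with rfl | hz0
  · simp [hf.2.2]
  · rw [← hf.mul_dslope z]
    simp [hz0]

theorem starlikeQuotient_eq_ite (hf : IsClassA f) (z : ℂ) :
    starlikeQuotient f z = if z = 0 then 1 else z * deriv f z / f z := by
  split_ifs with hz0
  · rw [starlikeQuotient, hz0, hf.dslope_zero, hf.2.2, div_one]
  · rw [starlikeQuotient, ← hf.mul_dslope z, mul_div_mul_left _ _ hz0]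

theorem starlikeQuotient_eq_add_one (hf : IsClassA f) (hz : z ∈ 𝔻) (hne : dslope f 0 z ≠ 0) :
    starlikeQuotient f z = z * logDeriv (dslope f 0) z + 1 := by
  have hderiv := (hasDerivAt_id z).mul
    (hf.differentiableOn_dslope.differentiableAt (isOpen_unitDisk.mem_nhds hz)).hasDerivAt
  have hf' : deriv f z = dslope f 0 z + z * deriv (dslope f 0) z := by
    simpa using (hderiv.congr_of_eventuallyEq
      (.of_forall fun w => (hf.mul_dslope w).symm)).deriv
  rw [starlikeQuotient, hf', logDeriv_apply]
  field_simp
  ring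

end IsClassA

theorem StarlikeOrder.isStarlikeFactor (hf : StarlikeOrder α f) (hα : α < 1) :
    IsStarlikeFactor α 1 (dslope f 0) := by
  obtain ⟨hfA, hne, hre⟩ := hf
  have hne' := hfA.forall_dslope_ne_zero_iff.2 hne
  refine ⟨hfA.differentiableOn_dslope, hne', fun z hz => ?_⟩
  have hq := hfA.starlikeQuotient_eq_add_one hz (hne' z hz)
  rw [hfA.starlikeQuotient_eq_ite] at hq
  rw [eq_sub_of_add_eq hq.symm, sub_re, one_re, sub_lt_sub_iff_right]
  split_ifs with hz0
  · simpa using hα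
  · exact hre z hz hz0

namespace StarlikeMM

theorem apply_zero (hf : StarlikeMM ψ f) : ψ 0 = 1 := by
  obtain ⟨-, -, ω, -, hω0, -, hω⟩ := hf
  simpa [hω0] using (hω 0 zero_mem_unitDisk).symm

theorem mapsTo_starlikeQuotient (hf : StarlikeMM ψ f) :
    MapsTo (starlikeQuotient f) 𝔻 (ψ '' 𝔻) := by
  obtain ⟨hfA, -, ω, -, -, hωmem, hω⟩ := hf
  intro z hz
  exact ⟨ω z, hωmem z hz, by rw [hfA.starlikeQuotient_eq_ite, ← hω z hz]⟩

theorem starlikeOrder_zero (hf : StarlikeMM ψ f) (hψ : ∀ z ∈ 𝔻, 0 < (ψ z).re) :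
    StarlikeOrder 0 f := by
  refine ⟨hf.1, hf.2.1, fun z hz hz0 => ?_⟩
  obtain ⟨w, hw, hwz⟩ := hf.mapsTo_starlikeQuotient hz
  rw [hf.1.starlikeQuotient_eq_ite, if_neg hz0] at hwz
  exact hwz ▸ hψ w hw

theorem of_mapsTo_starlikeQuotient (hψ : DifferentiableOn ℂ ψ 𝔻) (hinj : InjOn ψ 𝔻)
    (hψ0 : ψ 0 = 1) (hf : IsClassA f) (hne : ∀ z ∈ 𝔻, dslope f 0 z ≠ 0)
    (hmaps : MapsTo (starlikeQuotient f) 𝔻 (ψ '' 𝔻)) : StarlikeMM ψ f := by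
  refine ⟨hf, hf.forall_dslope_ne_zero_iff.1 hne, Function.invFunOn ψ 𝔻 ∘ starlikeQuotient f,
    ?_, ?_, fun z hz => Function.invFunOn_mem (hmaps hz), fun z hz => ?_⟩
  · exact (differentiableOn_invFunOn isOpen_unitDisk hψ hinj).comp
      ((hf.1.deriv isOpen_unitDisk).fun_div hf.differentiableOn_dslope hne) hmaps
  · rw [Function.comp_apply, hf.starlikeQuotient_eq_ite, if_pos rfl, ← hψ0]
    exact hinj.leftInvOn_invFunOn zero_mem_unitDisk
  · rw [Function.comp_apply, Function.invFunOn_eq (hmaps hz), hf.starlikeQuotient_eq_ite]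

theorem congr {g : ℂ → ℂ} (hf : StarlikeMM ψ f) (h : EqOn g f 𝔻) : StarlikeMM ψ g := by
  have hderiv : EqOn (deriv g) (deriv f) 𝔻 := h.deriv isOpen_unitDisk
  obtain ⟨⟨hfd, hf0, hf1⟩, hne, ω, hωd, hω0, hωmem, hω⟩ := hf
  refine ⟨⟨hfd.congr h, (h zero_mem_unitDisk).trans hf0, (hderiv zero_mem_unitDisk).trans hf1⟩,
    fun z hz => h hz ▸ hne z hz, ω, hωd, hω0, hωmem, fun z hz => ?_⟩
  simp only [h hz, hderiv hz]
  exact hω z hz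

end StarlikeMM

end StarlikeQuotient

section Convolution

variable {ψ f F : ℂ → ℂ} {a c : ℕ → ℂ}

theorem IsClassA.of_hasDiscExpansion (ha : HasDiscExpansion a f 1) (ha0 : a 0 = 0) (ha1 : a 1 = 1) :
    IsClassA f :=
  ⟨ha.differentiableOn, (ha.apply_zero one_pos).trans ha0, (ha.deriv_zero one_pos).trans ha1⟩

theorem IsClassA.coeff_zero (hf : IsClassA f) (ha : HasDiscExpansion a f 1) : a 0 = 0 :=
  (ha.apply_zero one_pos).symm.trans hf.2.1

theorem IsClassA.coeff_one (hf : IsClassA f) (ha : HasDiscExpansion a f 1) : a 1 = 1 :=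
  (ha.deriv_zero one_pos).symm.trans hf.2.2

theorem hasDiscExpansion_of_shift {κ : ℕ → ℂ}
    (h : ∀ z ∈ ball (0 : ℂ) 1, Summable fun n => κ (n + 1) * z ^ n) :
    HasDiscExpansion κ (fun z => ∑' n, κ n * z ^ n) 1 := fun z hz =>
  Summable.hasSum <| (summable_nat_add_iff 1).1 <| by
    simpa only [pow_succ', mul_left_comm] using (h z hz).mul_left z

theorem exists_starlikeMM_hadamard_div (hψ : DifferentiableOn ℂ ψ 𝔻) (hinj : InjOn ψ 𝔻)
    (hre : ∀ z ∈ 𝔻, 0 < (ψ z).re) (hconv : Convex ℝ (ψ '' 𝔻)) (hf : StarlikeOrder 0 f)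
    (hF : StarlikeMM ψ F) (ha : HasDiscExpansion a f 1) (hc : HasDiscExpansion c F 1) :
    ∃ k, StarlikeMM ψ k ∧ HasDiscExpansion (fun n => a n * c n / n) k 1 := by
  have hFfactor := (hF.starlikeOrder_zero hre).isStarlikeFactor one_pos
  have hmul : EqOn (fun z => dslope F 0 z * starlikeQuotient F z) (deriv F) (ball 0 1) :=
    fun z hz => mul_div_cancel₀ _ (hFfactor.ne_zero z hz)
  have hderiv : HasDiscExpansion (fun n => (n + 1) * c (n + 1))
      (fun z => dslope F 0 z * starlikeQuotient F z) 1 :=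
    fun z hz => (hmul hz).symm ▸ hc.deriv z hz
  have hcore {z : ℂ} (hz : z ∈ ball 0 1) := ha.dslope.hadamard_apply_mem hc.dslope hderiv
    (hf.isStarlikeFactor one_pos) hFfactor
    ((hF.1.1.deriv isOpen_unitDisk).fun_div hF.1.differentiableOn_dslope hFfactor.ne_zero)
    (isOpen_image_of_injOn isOpen_unitDisk hψ hinj) hconv hF.mapsTo_starlikeQuotient hz
  have hk := hasDiscExpansion_of_shift (κ := fun n => a n * c n / n) fun z hz => by
    obtain ⟨K, -, hK, -⟩ := hcore hz
    simpa [div_mul_eq_mul_div] using hK.summable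
  set k : ℂ → ℂ := fun z => ∑' n, a n * c n / n * z ^ n
  have hk_mem {z : ℂ} (hz : z ∈ ball 0 1) :
      dslope k 0 z ≠ 0 ∧ starlikeQuotient k z ∈ ψ '' 𝔻 := by
    obtain ⟨K, K', hK, hK', hK0, hmem⟩ := hcore hz
    have hKeq : dslope k 0 z = K := (hk.dslope z hz).unique (by simpa [div_mul_eq_mul_div] using hK)
    have hK'eq : deriv k z = K' := (hk.deriv z hz).unique <| hK'.congr_fun fun n => by
      push_cast
      ring
    rw [starlikeQuotient, hKeq, hK'eq]
    exact ⟨hK0, hmem⟩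
  refine ⟨k, .of_mapsTo_starlikeQuotient hψ hinj hF.apply_zero (.of_hasDiscExpansion hk ?_ ?_)
    (fun z hz => (hk_mem hz).1) fun z hz => (hk_mem hz).2, hk⟩
  · simp
  · simp [hf.1.coeff_one ha, hF.1.coeff_one hc]

theorem hasDiscExpansion_sq :
    HasDiscExpansion (fun n => (n : ℂ) ^ 2) (fun z => z * (1 + z) / (1 - z) ^ 3) 1 := by
  intro z hz
  have hz1 := mem_ball_zero_iff.1 hz
  have hne : 1 - z ≠ 0 := sub_ne_zero.2 fun h => by simp [← h] at hz1
  have hsum := (((hasSum_choose_mul_geometric_of_norm_lt_one 2 hz1).mul_left 2).sub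
    ((hasSum_choose_mul_geometric_of_norm_lt_one 1 hz1).mul_left 3)).add
    (hasSum_choose_mul_geometric_of_norm_lt_one 0 hz1)
  have hpartial : z * (1 + z) / (1 - z) ^ 3 =
      2 * (1 / (1 - z) ^ (2 + 1)) - 3 * (1 / (1 - z) ^ (1 + 1)) + 1 / (1 - z) ^ (0 + 1) := by
    field_simp
    ring
  have hchoose (n : ℕ) : ((n + 2).choose 2 : ℂ) = (n + 2) * (n + 1) / 2 := by
    rw [Nat.cast_choose_two]
    push_cast
    ring
  simp only [hpartial]
  refine hsum.congr_fun fun n => ?_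
  simp only [hchoose, Nat.choose_one_right, Nat.choose_zero_right]
  push_cast
  ring

theorem HasDiscExpansion.dilate (ha : HasDiscExpansion a f 1) {r : ℝ} (hr0 : 0 < r) (hr1 : r ≤ 1) :
    HasDiscExpansion (fun n => a n * (r : ℂ) ^ n / r) (fun z => f (r * z) / r) 1 := fun z hz => by
  have hrz : ∀ z ∈ ball (0 : ℂ) 1, (r : ℂ) * z ∈ ball (0 : ℂ) 1 := fun z hz => by
    rw [mem_ball_zero_iff] at *
    rw [norm_mul, norm_real, Real.norm_of_nonneg hr0.le]
    exact (mul_le_of_le_one_left (norm_nonneg z) hr1).trans_lt hz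
  simpa only [div_mul_eq_mul_div] using (ha.comp_const_mul hrz z hz).div_const (r : ℂ)

end Convolution

theorem stmt7_general {ψ : ℂ → ℂ} (hψ : DifferentiableOn ℂ ψ 𝔻) (hinj : InjOn ψ 𝔻)
    (hre : ∀ z ∈ 𝔻, 0 < (ψ z).re) (hconv : Convex ℝ (ψ '' 𝔻)) {r : ℝ} (hr0 : 0 < r) (hr1 : r ≤ 1)
    (hF : StarlikeMM ψ
      (fun z => (((r : ℂ) * z) * (1 + (r : ℂ) * z) / (1 - (r : ℂ) * z) ^ 3) / (r : ℂ)))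
    {f g h : ℂ → ℂ} {a b : ℕ → ℂ} (hf : StarlikeOrder 0 f) (hg : StarlikeOrder 0 g)
    (hfa : HasDiscExpansion a f 1) (hgb : HasDiscExpansion b g 1)
    (hhab : HasDiscExpansion (fun n => a n * b n) h 1) :
    StarlikeMM ψ (fun z => h ((r : ℂ) * z) / (r : ℂ)) := by
  -- Dividing by `n` once for each factor removes the weight `n ^ 2` of `F`.
  obtain ⟨k, hk, hkexp⟩ := exists_starlikeMM_hadamard_div hψ hinj hre hconv hg hF hgb
    (hasDiscExpansion_sq.dilate hr0 hr1)
  obtain ⟨l, hl, hlexp⟩ := exists_starlikeMM_hadamard_div hψ hinj hre hconv hf hk hfa hkexp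
  refine hl.congr fun z hz => (hhab.dilate hr0 hr1 z hz).unique ?_
  refine (hlexp z hz).congr_fun fun n => ?_
  rcases eq_or_ne n 0 with rfl | hn
  · simp [hf.1.coeff_zero hfa]
  · have hn' : (n : ℂ) ≠ 0 := Nat.cast_ne_zero.2 hn
    field_simp

theorem stmt7 (ψ : ℂ → ℂ) (hψ : MaMinda ψ) (hconv : Convex ℝ (ψ '' 𝔻))
    (r : ℝ) (hr0 : 0 < r) (hr1 : r ≤ 1)
    (hF : StarlikeMM ψ
      (fun z => (((r:ℂ)*z) * (1 + (r:ℂ)*z) / (1 - (r:ℂ)*z)^3) / (r:ℂ)))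
    (f g h : ℂ → ℂ) (a b : ℕ → ℂ)
    (hfS : StarlikeMM ψ f) (hgS : StarlikeMM ψ g)
    (ha0 : a 0 = 0) (ha1 : a 1 = 1) (hb0 : b 0 = 0) (hb1 : b 1 = 1)
    (hfa : ∀ z ∈ 𝔻, HasSum (fun n => a n * z^n) (f z))
    (hgb : ∀ z ∈ 𝔻, HasSum (fun n => b n * z^n) (g z))
    (hhab : ∀ z ∈ 𝔻, HasSum (fun n => a n * b n * z^n) (h z)) :
    StarlikeMM ψ (fun z => h ((r:ℂ)*z) / (r:ℂ)) :=
  stmt7_general hψ.1 hψ.2.1 hψ.2.2.1 hconv hr0 hr1 hF (hfS.starlikeOrder_zero hψ.2.2.1)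
    (hgS.starlikeOrder_zero hψ.2.2.1) hfa hgb hhab
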